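/- arXiv:math/0611310 — 2 statements merged into one kernel-verified Lean document; each statement's English description precedes it below -/
import Mathlib

section
/- (Bergelson's theorem for weakly mixing C*-dynamical systems) Let (A,ω,τ,G) be a weakly mixing C*-dynamical system with ω tracial, where G is a second countable topological group, Σ its Borel σ-algebra, μ a σ-finite right and left invariant measure, and (g,h,j,k) ↦ ω(τ_h(a₁) τ_g(a₂) τ_{gh}(a₃) τ_{jk}(a₄) τ_j(a₅) τ_k(a₆)) is Σ² × Σ²-measurable for all a₁,...,a₆ ∈ A. Assume there exist uniform Følner sequences (Λ_{1,n}) and (Λ_{2,n}) in G satisfying the Tempel'man condition and such that (Λ_{1,n}⁻¹Λ_{1,n}) and (Λ_{2,n}⁻¹Λ_{2,n}) are also Følner in G. If (A,ω,τ,G) is asymptotically abelian with respect to (Λ_{1,n}), then lim_{n→∞} (1/(μ(Λ_{1,n})μ(Λ_{2,n}))) ∫_{Λ_{1,n}} ∫_{Λ_{2,n}} ω(τ_{gh}(a) τ_g(b) τ_h(c) d) dg dh = ω(a)ω(b)ω(c)ω(d) for all a, b, c, d ∈ A. -/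
open MeasureTheory Filter Topology
open scoped Pointwise ComplexOrder

/-!
Since `a ↦ ω a • 1` contributes a mean that the mean ergodic theorem computes, one may assume
`ω a = 0` and has to show that the mean of `ω (τ (g * h) a * τ g b * τ h c * d)` tends to `0`. By
van der Corput's method, replace the integrand by its average over finitely many translates
`h ↦ k * h` and apply the Cauchy-Schwarz inequality in the GNS space of `ω`. The mean of the Gram
entry belonging to translates `k`, `k'` then tends, by traciality and two applications of the mean
ergodic theorem, to `ω (b * star b) * ω (star (τ k a) * τ k' a) * ω (τ k' c * star (τ k c))`. Weak
mixing provides translates `k` for which `τ k a` are pairwise almost orthogonal, so that only the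
diagonal entries survive, and these are negligible once the number of translates is large.
-/

section VanDerCorput

variable {X : Type*} [MeasurableSpace X] {P : Measure X}

theorem norm_integral_sq_le_integral_norm_sq [IsProbabilityMeasure P] {E : Type*}
    [NormedAddCommGroup E] [NormedSpace ℝ E] {f : X → E} (hf : MemLp f 2 P) :
    ‖∫ x, f x ∂P‖ ^ 2 ≤ ∫ x, ‖f x‖ ^ 2 ∂P := by
  have hvar := ProbabilityTheory.variance_nonneg (fun x => ‖f x‖) P
  rw [ProbabilityTheory.variance_eq_sub hf.norm] at hvar
  calc ‖∫ x, f x ∂P‖ ^ 2 ≤ (∫ x, ‖f x‖ ∂P) ^ 2 := by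
        gcongr; exact norm_integral_le_integral_norm f
    _ ≤ ∫ x, ‖f x‖ ^ 2 ∂P := sub_nonneg.mp hvar

theorem norm_integral_le_of_forall_norm_le [IsProbabilityMeasure P] {E : Type*}
    [NormedAddCommGroup E] [NormedSpace ℝ E] {f : X → E} {C : ℝ} (hf : ∀ x, ‖f x‖ ≤ C) :
    ‖∫ x, f x ∂P‖ ≤ C := by
  simpa using norm_integral_le_of_norm_le_const (μ := P) (.of_forall hf)

variable {𝕜 E κ : Type*} [RCLike 𝕜] [SeminormedAddCommGroup E] [InnerProductSpace 𝕜 E]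
  [Fintype κ]

theorem norm_sum_sq_eq_re_sum_sum_inner (v : κ → E) :
    ‖∑ i, v i‖ ^ 2 = RCLike.re (∑ i, ∑ j, inner 𝕜 (v i) (v j)) := by
  rw [← inner_self_eq_norm_sq (𝕜 := 𝕜), sum_inner]
  simp only [inner_sum]

theorem integrable_norm_sum_sq {v : κ → X → E}
    (hv : ∀ i j, Integrable (fun x => inner 𝕜 (v i x) (v j x)) P) :
    Integrable (fun x => ‖∑ i, v i x‖ ^ 2) P := by
  simp only [norm_sum_sq_eq_re_sum_sum_inner (𝕜 := 𝕜)]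
  exact (integrable_finsetSum _ fun i _ => integrable_finsetSum _ fun j _ => hv i j).re

theorem integral_norm_sum_sq_le {v : κ → X → E}
    (hv : ∀ i j, Integrable (fun x => inner 𝕜 (v i x) (v j x)) P) :
    ∫ x, ‖∑ i, v i x‖ ^ 2 ∂P ≤ ∑ i, ∑ j, ‖∫ x, inner 𝕜 (v i x) (v j x) ∂P‖ := by
  have hsum : ∀ i, Integrable (fun x => ∑ j, inner 𝕜 (v i x) (v j x)) P :=
    fun i => integrable_finsetSum _ fun j _ => hv i j
  calc ∫ x, ‖∑ i, v i x‖ ^ 2 ∂P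
      = RCLike.re (∑ i, ∑ j, ∫ x, inner 𝕜 (v i x) (v j x) ∂P) := by
        simp only [norm_sum_sq_eq_re_sum_sum_inner (𝕜 := 𝕜)]
        rw [integral_re (integrable_finsetSum _ fun i _ => hsum i),
          integral_finsetSum _ fun i _ => hsum i]
        simp only [integral_finsetSum _ fun j _ => hv _ j]
    _ ≤ ‖∑ i, ∑ j, ∫ x, inner 𝕜 (v i x) (v j x) ∂P‖ := RCLike.re_le_norm _
    _ ≤ ∑ i, ∑ j, ‖∫ x, inner 𝕜 (v i x) (v j x) ∂P‖ :=
        norm_sum_le_of_le _ fun i _ => norm_sum_le _ _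

theorem norm_integral_sum_inner_sq_le [IsProbabilityMeasure P] (d : E) {v : κ → X → E}
    (hd : ∀ i, AEStronglyMeasurable (fun x => inner 𝕜 d (v i x)) P)
    (hv : ∀ i j, Integrable (fun x => inner 𝕜 (v i x) (v j x)) P) :
    ‖∫ x, ∑ i, inner 𝕜 d (v i x) ∂P‖ ^ 2 ≤
      ‖d‖ ^ 2 * ∑ i, ∑ j, ‖∫ x, inner 𝕜 (v i x) (v j x) ∂P‖ := by
  have hcs : ∀ x, ‖∑ i, inner 𝕜 d (v i x)‖ ^ 2 ≤ ‖d‖ ^ 2 * ‖∑ i, v i x‖ ^ 2 := fun x => by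
    rw [← inner_sum, ← mul_pow]
    gcongr
    exact norm_inner_le_norm _ _
  have hmeas : AEStronglyMeasurable (fun x => ∑ i, inner 𝕜 d (v i x)) P :=
    Finset.aestronglyMeasurable_fun_sum _ fun i _ => hd i
  have hdom : Integrable (fun x => ‖d‖ ^ 2 * ‖∑ i, v i x‖ ^ 2) P :=
    (integrable_norm_sum_sq hv).const_mul _
  have hsq : Integrable (fun x => ‖∑ i, inner 𝕜 d (v i x)‖ ^ 2) P :=
    hdom.mono' (hmeas.norm.pow 2) (.of_forall fun x => by simpa using hcs x)
  calc ‖∫ x, ∑ i, inner 𝕜 d (v i x) ∂P‖ ^ 2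
      ≤ ∫ x, ‖∑ i, inner 𝕜 d (v i x)‖ ^ 2 ∂P :=
        norm_integral_sq_le_integral_norm_sq ((memLp_two_iff_integrable_sq_norm hmeas).2 hsq)
    _ ≤ ∫ x, ‖d‖ ^ 2 * ‖∑ i, v i x‖ ^ 2 ∂P := integral_mono hsq hdom hcs
    _ = ‖d‖ ^ 2 * ∫ x, ‖∑ i, v i x‖ ^ 2 ∂P := integral_const_mul _ _
    _ ≤ _ := by gcongr; exact integral_norm_sum_sq_le hv

end VanDerCorput

section AsymptoticInvariance

/-- The measures `P i` are eventually probability measures, and translating a bounded measurable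
function by a fixed `k` changes its mean by an amount that tends to `0` along `l`, uniformly over
all functions with a given bound. This is all that is needed of averages over Følner sets, and it
is phrased for measures so that it passes to images under inversion. -/
structure IsAsymptoticallyInvariant {G ι : Type*} [Mul G] [MeasurableSpace G]
    (P : ι → Measure G) (l : Filter ι) : Prop where
  eventually_isProbabilityMeasure : ∀ᶠ i in l, IsProbabilityMeasure (P i)
  eventually_norm_integral_mul_left_sub_le (k : G) {ε : ℝ} (hε : 0 < ε) :
    ∀ᶠ i in l, ∀ (f : G → ℂ) (M : ℝ), Measurable f → (∀ g, ‖f g‖ ≤ M) →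
      ‖∫ g, f (k * g) ∂P i - ∫ g, f g ∂P i‖ ≤ ε * M

variable {G ι : Type*} [MeasurableSpace G] {l : Filter ι}

theorem norm_setIntegral_sub_setIntegral_le {E : Type*} [NormedAddCommGroup E] [NormedSpace ℝ E]
    {μ : Measure G} {s t : Set G} (hs : MeasurableSet s) (ht : MeasurableSet t)
    (hμs : μ s ≠ ⊤) (hμt : μ t ≠ ⊤) {f : G → E} (hf : StronglyMeasurable f) {M : ℝ}
    (hM : ∀ g, ‖f g‖ ≤ M) :
    ‖∫ g in s, f g ∂μ - ∫ g in t, f g ∂μ‖ ≤ M * μ.real (symmDiff s t) := by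
  have hint : ∀ {u : Set G}, μ u ≠ ⊤ → IntegrableOn f u μ := fun hu =>
    IntegrableOn.of_bound hu.lt_top hf.aestronglyMeasurable M (.of_forall hM)
  have hst : μ (s \ t) < ⊤ := (measure_mono Set.sdiff_subset).trans_lt hμs.lt_top
  have hts : μ (t \ s) < ⊤ := (measure_mono Set.sdiff_subset).trans_lt hμt.lt_top
  have hsub : ∫ g in s, f g ∂μ - ∫ g in t, f g ∂μ =
      ∫ g in s \ t, f g ∂μ - ∫ g in t \ s, f g ∂μ := by
    rw [← integral_inter_add_sdiff ht (hint hμs), ← integral_inter_add_sdiff hs (hint hμt),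
      Set.inter_comm t s]
    abel
  calc ‖∫ g in s, f g ∂μ - ∫ g in t, f g ∂μ‖
      ≤ ‖∫ g in s \ t, f g ∂μ‖ + ‖∫ g in t \ s, f g ∂μ‖ := hsub ▸ norm_sub_le _ _
    _ ≤ M * μ.real (s \ t) + M * μ.real (t \ s) :=
        add_le_add (norm_setIntegral_le_of_norm_le_const hst fun g _ => hM g)
          (norm_setIntegral_le_of_norm_le_const hts fun g _ => hM g)
    _ = M * μ.real (symmDiff s t) := by
        rw [measureReal_symmDiff_eq hs ht, mul_add]

theorem integral_cond {X E : Type*} [MeasurableSpace X] [NormedAddCommGroup E] [NormedSpace ℝ E]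
    (μ : Measure X) (s : Set X) (f : X → E) :
    ∫ x, f x ∂ProbabilityTheory.cond μ s = ⨍ x in s, f x ∂μ := by
  rw [setAverage_eq', ProbabilityTheory.cond]

theorem isAsymptoticallyInvariant_cond_of_isFoelner [Group G] [MeasurableMul G] {μ : Measure G}
    [μ.IsMulLeftInvariant] {Λ : ι → Set G} (hΛ : IsFoelner G μ l Λ) :
    IsAsymptoticallyInvariant (fun i => ProbabilityTheory.cond μ (Λ i)) l where
  eventually_isProbabilityMeasure := by
    filter_upwards [hΛ.eventually_meas_ne_zero, hΛ.eventually_meas_ne_top] with i h0 htop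
    exact ProbabilityTheory.cond_isProbabilityMeasure_of_finite h0 htop
  eventually_norm_integral_mul_left_sub_le k ε hε := by
    filter_upwards [hΛ.eventually_meas_ne_zero, hΛ.eventually_meas_ne_top,
      hΛ.eventually_measurableSet,
      (hΛ.tendsto_meas_smul_symmDiff k).eventually (gt_mem_nhds (ENNReal.ofReal_pos.2 hε))]
      with i h0 htop hmeas hsmall f M hf hM
    have hM0 : 0 ≤ M := (norm_nonneg _).trans (hM 1)
    have hpos : 0 < μ.real (Λ i) := ENNReal.toReal_pos h0 htop
    have htranslate : ∫ g in Λ i, f (k * g) ∂μ = ∫ g in k • Λ i, f g ∂μ :=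
      ((measurePreserving_mul_left μ k).setIntegral_image_emb
        (measurableEmbedding_mulLeft k) f (Λ i)).symm
    have hratio : μ.real (symmDiff (k • Λ i) (Λ i)) ≤ ε * μ.real (Λ i) := by
      rw [← div_le_iff₀ hpos, measureReal_def, measureReal_def, ← ENNReal.toReal_div]
      exact ENNReal.toReal_le_of_le_ofReal hε.le hsmall.le
    rw [integral_cond, integral_cond, setAverage_eq, setAverage_eq, ← smul_sub, norm_smul,
      htranslate, norm_inv, Real.norm_of_nonneg hpos.le, inv_mul_le_iff₀ hpos]
    calc _ ≤ M * μ.real (symmDiff (k • Λ i) (Λ i)) :=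
          norm_setIntegral_sub_setIntegral_le (hmeas.const_smul k) hmeas
            (by rwa [measure_smul]) htop hf.stronglyMeasurable hM
      _ ≤ M * (ε * μ.real (Λ i)) := by gcongr
      _ = μ.real (Λ i) * (ε * M) := by ring

namespace IsAsymptoticallyInvariant

variable {P : ι → Measure G}

theorem inv [CommGroup G] [MeasurableInv G] (hP : IsAsymptoticallyInvariant P l) :
    IsAsymptoticallyInvariant (fun i => (P i).inv) l where
  eventually_isProbabilityMeasure := by
    filter_upwards [hP.eventually_isProbabilityMeasure] with i hi
    exact Measure.isProbabilityMeasure_map measurable_inv.aemeasurable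
  eventually_norm_integral_mul_left_sub_le k ε hε := by
    filter_upwards [hP.eventually_norm_integral_mul_left_sub_le k⁻¹ hε] with i hi f M hf hM
    have hint : ∀ f : G → ℂ, ∫ g, f g ∂(P i).inv = ∫ g, f g⁻¹ ∂P i :=
      integral_map_equiv (MeasurableEquiv.inv G)
    simpa only [hint, mul_inv, inv_inv] using
      hi (fun g => f g⁻¹) M (hf.comp measurable_inv) fun g => hM g⁻¹

theorem eventually_norm_integral_le [Group G] [MeasurableMul G]
    (hP : IsAsymptoticallyInvariant P l) {κ : Type*} [Fintype κ] [Nonempty κ] (k : κ → G)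
    {ε : ℝ} (hε : 0 < ε) :
    ∀ᶠ i in l, ∀ (f : G → ℂ) (M : ℝ), Measurable f → (∀ g, ‖f g‖ ≤ M) →
      ‖∫ g, f g ∂P i‖ ≤ ‖∫ g, ∑ j, f (k j * g) ∂P i‖ / Fintype.card κ + ε * M := by
  have htranslates := eventually_all.2 fun j =>
    hP.eventually_norm_integral_mul_left_sub_le (k j) hε
  filter_upwards [hP.eventually_isProbabilityMeasure, htranslates] with i _ hi f M hf hM
  have hcard : (0 : ℝ) < Fintype.card κ := mod_cast Fintype.card_pos
  have hint : ∀ j, Integrable (fun g => f (k j * g)) (P i) := fun j =>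
    .of_bound (hf.comp (measurable_const_mul _)).aestronglyMeasurable M
      (.of_forall fun g => hM _)
  have hsplit : (Fintype.card κ : ℂ) * ∫ g, f g ∂P i =
      ∫ g, ∑ j, f (k j * g) ∂P i -
        ∑ j, (∫ g, f (k j * g) ∂P i - ∫ g, f g ∂P i) := by
    rw [integral_finsetSum _ fun j _ => hint j, Finset.sum_sub_distrib]
    simp
  have hbound : Fintype.card κ * ‖∫ g, f g ∂P i‖ ≤
      ‖∫ g, ∑ j, f (k j * g) ∂P i‖ + Fintype.card κ * (ε * M) :=
    calc Fintype.card κ * ‖∫ g, f g ∂P i‖ = ‖(Fintype.card κ : ℂ) * ∫ g, f g ∂P i‖ := by simp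
      _ ≤ _ := by
        rw [hsplit]
        refine norm_sub_le_of_le le_rfl ((norm_sum_le_of_le _ fun j _ => hi j f M hf hM).trans ?_)
        simp
  rw [← mul_le_mul_iff_right₀ hcard, mul_add, mul_div_cancel₀ _ hcard.ne']
  exact hbound

end IsAsymptoticallyInvariant

end AsymptoticInvariance

section State

variable {A : Type*} [CStarAlgebra A] [PartialOrder A] [StarOrderedRing A]

theorem inner_toPreGNS (ω : A →ₚ[ℂ] ℂ) (a b : A) :
    inner ℂ (ω.toPreGNS a) (ω.toPreGNS b) = ω (star a * b) := rfl

theorem norm_toPreGNS_le {ω : A →ₚ[ℂ] ℂ} (hω : ω 1 = 1) (a : A) : ‖ω.toPreGNS a‖ ≤ ‖a‖ := by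
  have hone : ‖ω.toPreGNS 1‖ = 1 := by
    simp [PositiveLinearMap.preGNS_norm_def, hω]
  calc ‖ω.toPreGNS a‖ = ‖ω.leftMulMapPreGNS a (ω.toPreGNS 1)‖ := by simp
    _ ≤ ‖a‖ * ‖ω.toPreGNS 1‖ := by
      exact (ω.leftMulMapPreGNS a).le_of_opNorm_le
        (LinearMap.mkContinuous_norm_le _ (norm_nonneg a) _) _
    _ = ‖a‖ := by rw [hone, mul_one]

theorem norm_apply_star_mul_le {ω : A →ₚ[ℂ] ℂ} (hω : ω 1 = 1) (a b : A) :
    ‖ω (star a * b)‖ ≤ ‖a‖ * ‖b‖ :=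
  calc ‖ω (star a * b)‖ ≤ ‖ω.toPreGNS a‖ * ‖ω.toPreGNS b‖ := by
        rw [← inner_toPreGNS]; exact norm_inner_le_norm _ _
    _ ≤ ‖a‖ * ‖b‖ := by gcongr <;> exact norm_toPreGNS_le hω _

theorem norm_apply_mul_le {ω : A →ₚ[ℂ] ℂ} (hω : ω 1 = 1) (a b : A) :
    ‖ω (a * b)‖ ≤ ‖a‖ * ‖b‖ := by
  simpa using norm_apply_star_mul_le hω (star a) b

theorem norm_apply_le {ω : A →ₚ[ℂ] ℂ} (hω : ω 1 = 1) (a : A) : ‖ω a‖ ≤ ‖a‖ := by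
  have : Nontrivial A := ⟨0, 1, fun h => by simp [← h] at hω⟩
  simpa using norm_apply_mul_le hω a 1

theorem norm_integral_sum_apply_mul_sq_le {ω : A →ₚ[ℂ] ℂ} (hω : ω 1 = 1) {X κ : Type*}
    [MeasurableSpace X] {P : Measure X} [IsProbabilityMeasure P] [Fintype κ] (d : A)
    {v : κ → X → A} (hd : ∀ j, AEStronglyMeasurable (fun x => ω (d * v j x)) P)
    (hv : ∀ i j, Integrable (fun x => ω (star (v i x) * v j x)) P) :
    ‖∫ x, ∑ j, ω (d * v j x) ∂P‖ ^ 2 ≤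
      ‖d‖ ^ 2 * ∑ i, ∑ j, ‖∫ x, ω (star (v i x) * v j x) ∂P‖ := by
  have hvdC := norm_integral_sum_inner_sq_le (𝕜 := ℂ) (ω.toPreGNS (star d))
    (v := fun j x => ω.toPreGNS (v j x))
    (fun j => by simpa only [inner_toPreGNS, star_star] using hd j)
    (fun i j => by simpa only [inner_toPreGNS] using hv i j)
  simp only [inner_toPreGNS, star_star] at hvdC
  refine hvdC.trans ?_
  gcongr
  simpa only [norm_star] using norm_toPreGNS_le hω (star d)

end State

section TripleProduct

variable {A : Type*} [CStarAlgebra A] {G : Type*} [Monoid G]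

theorem starAlgAut_apply_apply (τ : G →* (A ≃⋆ₐ[ℂ] A)) (g h : G) (a : A) :
    τ g (τ h a) = τ (g * h) a := by
  rw [map_mul, StarAlgEquiv.mul_apply]

/-- The product `τ_{gh}(a) τ_g(b) τ_h(c)` of which Bergelson's theorem computes the mean; the
argument is `p = (h, g)`, so that the first coordinate is the outer integration variable. -/
def tripleProduct (τ : G →* (A ≃⋆ₐ[ℂ] A)) (a b c : A) (p : G × G) : A :=
  τ (p.2 * p.1) a * τ p.2 b * τ p.1 c

theorem norm_tripleProduct_le (τ : G →* (A ≃⋆ₐ[ℂ] A)) (a b c : A) (p : G × G) :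
    ‖tripleProduct τ a b c p‖ ≤ ‖a‖ * ‖b‖ * ‖c‖ := by
  refine (norm_mul₃_le ..).trans_eq ?_
  simp only [StarAlgEquiv.norm_map]

theorem norm_apply_tripleProduct_mul_le [PartialOrder A] [StarOrderedRing A] {ω : A →ₚ[ℂ] ℂ}
    {τ : G →* (A ≃⋆ₐ[ℂ] A)} (hω : ω 1 = 1) (a b c d : A) (p : G × G) :
    ‖ω (tripleProduct τ a b c p * d)‖ ≤ ‖a‖ * ‖b‖ * ‖c‖ * ‖d‖ := by
  refine (norm_apply_mul_le hω _ d).trans ?_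
  gcongr
  exact norm_tripleProduct_le ..

theorem apply_star_tripleProduct_mul_tripleProduct {R G : Type*} [CommMonoid G] {ω : A → R}
    (htr : ∀ a b, ω (a * b) = ω (b * a)) (τ : G →* (A ≃⋆ₐ[ℂ] A)) (a b c : A) (k k' h g : G) :
    ω (star (tripleProduct τ a b c (k * h, g)) * tripleProduct τ a b c (k' * h, g)) =
      ω (τ h (τ k' c * star (τ k c)) * τ g (star b) * τ (g * h) (star (τ k a) * τ k' a) *
        τ g b) := by
  calc ω (star (tripleProduct τ a b c (k * h, g)) * tripleProduct τ a b c (k' * h, g))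
      = ω (τ h (star (τ k c)) * τ g (star b) * τ (g * h) (star (τ k a) * τ k' a) * τ g b *
          τ h (τ k' c)) := by
        simp only [tripleProduct, star_mul, map_star, map_mul (τ _), starAlgAut_apply_apply,
          mul_comm k h, mul_comm k' h, mul_assoc]
    _ = _ := by
        rw [htr, map_mul (τ h)]
        simp only [mul_assoc]

end TripleProduct

section DynamicalSystem

variable {A : Type*} [CStarAlgebra A] [PartialOrder A] {G : Type*} [CommGroup G]
  [MeasurableSpace G]

/-- A C⋆-dynamical system: an action `τ` of `G` by ⋆-automorphisms that preserves the state `ω` and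
has measurable correlation functions. A state is encoded as a positive functional that is `1`
at `1`. -/
structure IsCStarDynamicalSystem (ω : A →ₚ[ℂ] ℂ) (τ : G →* (A ≃⋆ₐ[ℂ] A)) : Prop where
  map_one : ω 1 = 1
  map_apply (g : G) (a : A) : ω (τ g a) = ω a
  measurable_mul_apply (a b : A) : Measurable fun g => ω (a * τ g b)

/-- Weak mixing, in the form free of averages: any finitely many correlations `ω (a * τ g b)` are
simultaneously close to `ω a * ω b` for some `g`. -/
def IsWeaklyMixing (ω : A →ₚ[ℂ] ℂ) (τ : G →* (A ≃⋆ₐ[ℂ] A)) : Prop :=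
  ∀ (s : Finset (A × A)) (ε : ℝ), 0 < ε →
    ∃ g, ∀ p ∈ s, ‖ω (p.1 * τ g p.2) - ω p.1 * ω p.2‖ < ε

/-- Joint measurability of the correlations that occur as Gram entries in the van der Corput
estimate for the triple products. -/
def HasMeasurableCorrelations (ω : A → ℂ) (τ : G → (A ≃⋆ₐ[ℂ] A)) : Prop :=
  ∀ a₁ a₂ a₃ a₄ a₅ : A, Measurable fun p : G × G =>
    ω (τ p.1 a₁ * τ p.2 a₂ * τ (p.2 * p.1) a₃ * τ p.2 a₄ * a₅)

variable [StarOrderedRing A]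

namespace IsCStarDynamicalSystem

variable {ω : A →ₚ[ℂ] ℂ} {τ : G →* (A ≃⋆ₐ[ℂ] A)}

theorem norm_apply_mul_apply_le (hτ : IsCStarDynamicalSystem ω τ) (a b : A) (g : G) :
    ‖ω (a * τ g b)‖ ≤ ‖a‖ * ‖b‖ := by
  simpa only [StarAlgEquiv.norm_map] using norm_apply_mul_le hτ.map_one a (τ g b)

theorem integrable_apply_mul_apply (hτ : IsCStarDynamicalSystem ω τ) (P : Measure G)
    [IsFiniteMeasure P] (a b : A) : Integrable (fun g => ω (a * τ g b)) P :=
  .of_bound (hτ.measurable_mul_apply a b).aestronglyMeasurable _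
    (.of_forall (hτ.norm_apply_mul_apply_le a b))

theorem isWeaklyMixing_of_tendsto_setAverage (hτ : IsCStarDynamicalSystem ω τ) {μ : Measure G}
    {ι : Type*} {l : Filter ι} [l.NeBot] {Λ : ι → Set G}
    (h0 : ∀ᶠ i in l, μ (Λ i) ≠ 0) (htop : ∀ᶠ i in l, μ (Λ i) ≠ ⊤)
    (hlim : ∀ a b, Tendsto (fun i => ⨍ g in Λ i, ‖ω (a * τ g b) - ω a * ω b‖ ∂μ) l (𝓝 0)) :
    IsWeaklyMixing ω τ := by
  intro s ε hε
  have hsum : Tendsto (fun i => ∑ p ∈ s, ⨍ g in Λ i, ‖ω (p.1 * τ g p.2) - ω p.1 * ω p.2‖ ∂μ)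
      l (𝓝 0) := by
    simpa using tendsto_finsetSum s fun p _ => hlim p.1 p.2
  obtain ⟨i, hi0, hitop, hi⟩ := (h0.and (htop.and (hsum.eventually (gt_mem_nhds hε)))).exists
  have : IsFiniteMeasure (μ.restrict (Λ i)) := isFiniteMeasure_restrict.2 hitop
  have hint : ∀ p ∈ s, Integrable (fun g => ‖ω (p.1 * τ g p.2) - ω p.1 * ω p.2‖)
      (μ.restrict (Λ i)) := fun p _ =>
    ((hτ.integrable_apply_mul_apply _ p.1 p.2).sub (integrable_const _)).norm
  obtain ⟨g, -, hg⟩ := exists_le_setAverage hi0 hitop (integrable_finsetSum s hint)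
  refine ⟨g, fun p hp => ?_⟩
  calc ‖ω (p.1 * τ g p.2) - ω p.1 * ω p.2‖
      ≤ ∑ p ∈ s, ‖ω (p.1 * τ g p.2) - ω p.1 * ω p.2‖ :=
        Finset.single_le_sum (f := fun p => ‖ω (p.1 * τ g p.2) - ω p.1 * ω p.2‖)
          (fun _ _ => norm_nonneg _) hp
    _ ≤ ⨍ g in Λ i, ∑ p ∈ s, ‖ω (p.1 * τ g p.2) - ω p.1 * ω p.2‖ ∂μ := hg
    _ = ∑ p ∈ s, ⨍ g in Λ i, ‖ω (p.1 * τ g p.2) - ω p.1 * ω p.2‖ ∂μ := by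
        simp only [setAverage_eq, integral_finsetSum s hint, Finset.smul_sum]
    _ < ε := hi

/-- Weak mixing allows translates to be chosen one after the other, each nearly orthogonal to all
earlier ones. -/
theorem exists_sum_sum_norm_apply_star_mul_le (hτ : IsCStarDynamicalSystem ω τ)
    (hmix : IsWeaklyMixing ω τ) {a : A} (ha : ω a = 0) {ε : ℝ} (hε : 0 < ε) :
    ∃ (N : ℕ) (_ : NeZero N) (k : Fin N → G),
      ∑ i, ∑ j, ‖ω (star (τ (k i) a) * τ (k j) a)‖ ≤ ε * N ^ 2 := by
  let r : G → G → Prop := fun x y => ‖ω (star (τ x a) * τ y a)‖ < ε / 2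
  have : Std.Symm r := ⟨fun x y h => by
    simp only [r, ← inner_toPreGNS] at h ⊢
    rwa [norm_inner_symm]⟩
  obtain ⟨k, -, hk⟩ := exists_seq_of_forall_finset_exists' (fun _ => True) r fun s _ => by
    classical
    obtain ⟨y, hy⟩ := hmix (s.image fun x => (star (τ x a), a)) (ε / 2) (half_pos hε)
    refine ⟨y, trivial, fun x hx => ?_⟩
    simpa [r, ha] using hy _ (Finset.mem_image_of_mem _ hx)
  obtain ⟨N, hN⟩ := exists_nat_gt (2 * ‖a‖ ^ 2 / ε)
  have hNpos : (0 : ℝ) < N := (by positivity : 0 ≤ 2 * ‖a‖ ^ 2 / ε).trans_lt hN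
  have hentry : ∀ i j : Fin N, ‖ω (star (τ (k i) a) * τ (k j) a)‖ ≤
      ε / 2 + if i = j then ‖a‖ ^ 2 else 0 := fun i j => by
    split_ifs with hij
    · have := norm_apply_star_mul_le hτ.map_one (τ (k i) a) (τ (k j) a)
      simp only [StarAlgEquiv.norm_map, ← sq] at this
      linarith
    · simpa using (hk (Fin.val_ne_of_ne hij)).le
  refine ⟨N, ⟨by exact_mod_cast hNpos.ne'⟩, fun i => k i, ?_⟩
  calc ∑ i : Fin N, ∑ j : Fin N, ‖ω (star (τ (k i) a) * τ (k j) a)‖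
      ≤ ∑ i : Fin N, ∑ j : Fin N, (ε / 2 + if i = j then ‖a‖ ^ 2 else 0) :=
        Finset.sum_le_sum fun i _ => Finset.sum_le_sum fun j _ => hentry i j
    _ = N * (N * (ε / 2) + ‖a‖ ^ 2) := by simp [Finset.sum_add_distrib, mul_add]
    _ ≤ ε * N ^ 2 := by
      rw [div_lt_iff₀ hε] at hN
      nlinarith

theorem eventually_norm_integral_apply_mul_apply_le (hτ : IsCStarDynamicalSystem ω τ)
    (hmix : IsWeaklyMixing ω τ) {ι : Type*} {l : Filter ι} {P : ι → Measure G} [MeasurableMul G]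
    (hP : IsAsymptoticallyInvariant P l) {c : A} (hc : ω c = 0) {ε : ℝ} (hε : 0 < ε) :
    ∀ᶠ i in l, ∀ x, ‖∫ g, ω (x * τ g c) ∂P i‖ ≤ ε * ‖x‖ := by
  obtain ⟨δ, hδ, hδε⟩ : ∃ δ > 0, δ * (1 + ‖c‖) = ε :=
    ⟨ε / (1 + ‖c‖), by positivity, by field_simp⟩
  obtain ⟨N, _, k, hk⟩ := hτ.exists_sum_sum_norm_apply_star_mul_le hmix hc (pow_pos hδ 2)
  filter_upwards [hP.eventually_isProbabilityMeasure, hP.eventually_norm_integral_le k hδ]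
    with i _ hi x
  have hgram : ∀ m n g, ω (star (τ (k m * g) c) * τ (k n * g) c) =
      ω (star (τ (k m) c) * τ (k n) c) := fun m n g => by
    rw [← hτ.map_apply g (star (τ (k m) c) * _)]
    simp only [mul_comm _ g, map_mul, map_star, StarAlgEquiv.mul_apply]
  have hvdC : ‖∫ g, ∑ j, ω (x * τ (k j * g) c) ∂P i‖ ^ 2 ≤ (‖x‖ * (δ * N)) ^ 2 :=
    calc ‖∫ g, ∑ j, ω (x * τ (k j * g) c) ∂P i‖ ^ 2
        ≤ ‖x‖ ^ 2 * ∑ m, ∑ n, ‖∫ g, ω (star (τ (k m * g) c) * τ (k n * g) c) ∂P i‖ :=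
          norm_integral_sum_apply_mul_sq_le hτ.map_one x
            (fun j => ((hτ.measurable_mul_apply x c).comp
              (measurable_const_mul _)).aestronglyMeasurable)
            (fun m n => by simp only [hgram]; exact integrable_const _)
      _ ≤ ‖x‖ ^ 2 * (δ ^ 2 * N ^ 2) := by
          simp only [hgram, integral_const, probReal_univ, one_smul]
          gcongr
      _ = (‖x‖ * (δ * N)) ^ 2 := by ring
  have hN : (0 : ℝ) < N := mod_cast NeZero.pos N
  calc ‖∫ g, ω (x * τ g c) ∂P i‖
      ≤ ‖∫ g, ∑ j, ω (x * τ (k j * g) c) ∂P i‖ / Fintype.card (Fin N) + δ * (‖x‖ * ‖c‖) :=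
        hi _ _ (hτ.measurable_mul_apply x c) (hτ.norm_apply_mul_apply_le x c)
    _ ≤ ‖x‖ * (δ * N) / N + δ * (‖x‖ * ‖c‖) := by
        rw [Fintype.card_fin]
        gcongr
        exact le_of_sq_le_sq hvdC (by positivity)
    _ = ε * ‖x‖ := by rw [← hδε]; field_simp

theorem eventually_norm_integral_apply_mul_apply_sub_le (hτ : IsCStarDynamicalSystem ω τ)
    (hmix : IsWeaklyMixing ω τ) {ι : Type*} {l : Filter ι} {P : ι → Measure G} [MeasurableMul G]
    (hP : IsAsymptoticallyInvariant P l) (y : A) {ε : ℝ} (hε : 0 < ε) :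
    ∀ᶠ i in l, ∀ x, ‖∫ g, ω (x * τ g y) ∂P i - ω x * ω y‖ ≤ ε * ‖x‖ := by
  have hy : ω (y - ω y • 1) = 0 := by simp [hτ.map_one]
  filter_upwards [hP.eventually_isProbabilityMeasure,
    hτ.eventually_norm_integral_apply_mul_apply_le hmix hP hy hε] with i _ hi x
  have hsub : ∫ g, ω (x * τ g (y - ω y • 1)) ∂P i = ∫ g, ω (x * τ g y) ∂P i - ω x * ω y := by
    simp [mul_sub, integral_sub (hτ.integrable_apply_mul_apply (P i) x y) (integrable_const _),
      mul_comm]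
  exact hsub ▸ hi x

theorem tendsto_integral_apply_mul_apply (hτ : IsCStarDynamicalSystem ω τ)
    (hmix : IsWeaklyMixing ω τ) {ι : Type*} {l : Filter ι} {P : ι → Measure G} [MeasurableMul G]
    (hP : IsAsymptoticallyInvariant P l) (x y : A) :
    Tendsto (fun i => ∫ g, ω (x * τ g y) ∂P i) l (𝓝 (ω x * ω y)) := by
  refine Metric.tendsto_nhds.2 fun ε hε => ?_
  filter_upwards [hτ.eventually_norm_integral_apply_mul_apply_sub_le hmix hP y
    (ε := ε / (1 + ‖x‖)) (by positivity)] with i hi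
  rw [dist_eq_norm]
  refine (hi x).trans_lt ?_
  rw [div_mul_eq_mul_div, div_lt_iff₀ (by positivity)]
  linarith

theorem tendsto_integral_integral_apply_mul_apply (hτ : IsCStarDynamicalSystem ω τ)
    (hmix : IsWeaklyMixing ω τ) {ι Y : Type*} [MeasurableSpace Y] {l : Filter ι}
    {P : ι → Measure Y} {Q : ι → Measure G} [MeasurableMul G]
    (hP : ∀ᶠ i in l, IsProbabilityMeasure (P i)) (hQ : IsAsymptoticallyInvariant Q l)
    {x : Y → A} {M : ℝ} (hM : ∀ h, ‖x h‖ ≤ M) (y : A)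
    (hx : Measurable fun h => ω (x h)) (hxy : Measurable fun p : Y × G => ω (x p.1 * τ p.2 y))
    {L : ℂ} (hL : Tendsto (fun i => ∫ h, ω (x h) ∂P i) l (𝓝 L)) :
    Tendsto (fun i => ∫ h, ∫ g, ω (x h * τ g y) ∂Q i ∂P i) l (𝓝 (L * ω y)) := by
  suffices hdiff : Tendsto (fun i =>
      ∫ h, ∫ g, ω (x h * τ g y) ∂Q i ∂P i - (∫ h, ω (x h) ∂P i) * ω y) l (𝓝 0) by
    simpa using hdiff.add (hL.mul_const (ω y))
  refine Metric.tendsto_nhds.2 fun ε hε => ?_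
  filter_upwards [hP, hQ.eventually_isProbabilityMeasure,
    hτ.eventually_norm_integral_apply_mul_apply_sub_le hmix hQ y
      (ε := ε / (1 + |M|)) (by positivity)] with i _ _ hi
  have hint : Integrable (fun h => ω (x h) * ω y) (P i) :=
    (Integrable.of_bound hx.aestronglyMeasurable M
      (.of_forall fun h => (norm_apply_le hτ.map_one _).trans (hM h))).mul_const _
  have hint' : Integrable (fun h => ∫ g, ω (x h * τ g y) ∂Q i) (P i) := by
    refine .of_bound hxy.stronglyMeasurable.integral_prod_right.aestronglyMeasurable (M * ‖y‖)
      (.of_forall fun h => ?_)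
    refine norm_integral_le_of_forall_norm_le fun g =>
      (hτ.norm_apply_mul_apply_le (x h) y g).trans ?_
    gcongr
    exact hM h
  rw [dist_zero_right, ← integral_mul_const, ← integral_sub hint' hint]
  calc ‖∫ h, (∫ g, ω (x h * τ g y) ∂Q i - ω (x h) * ω y) ∂P i‖
      ≤ ε / (1 + |M|) * |M| := by
        refine norm_integral_le_of_forall_norm_le fun h => (hi (x h)).trans ?_
        gcongr
        exact (hM h).trans (le_abs_self M)
    _ < ε := by
        rw [div_mul_eq_mul_div, div_lt_iff₀ (by positivity)]
        linarith

end IsCStarDynamicalSystem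

variable {ω : A →ₚ[ℂ] ℂ} {τ : G →* (A ≃⋆ₐ[ℂ] A)}

theorem HasMeasurableCorrelations.measurable_apply_tripleProduct_mul
    (hmeas : HasMeasurableCorrelations ω τ) (htr : ∀ a b, ω (a * b) = ω (b * a)) (a b c d : A) :
    Measurable fun p => ω (tripleProduct τ a b c p * d) := by
  have hstar : ∀ p : G × G, ω (tripleProduct τ a b c p * d) = star (ω (τ p.1 (star c) *
      τ p.2 (star b) * τ (p.2 * p.1) (star a) * τ p.2 1 * star d)) := fun p => by
    rw [← map_star ω, tripleProduct, htr]
    simp only [star_mul, star_star, map_star, map_one, mul_one, mul_assoc]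
  simp only [hstar]
  exact continuous_star.measurable.comp (hmeas _ _ _ _ _)

namespace IsCStarDynamicalSystem

variable [MeasurableMul G] {ι : Type*} {l : Filter ι} {P Q : ι → Measure G}

/-- Applying `τ (g * h)⁻¹` and traciality moves all dependence on `g` into a single factor
`τ g⁻¹ c`, to which the mean ergodic theorem applies. -/
theorem tendsto_integral_integral_correlation [MeasurableInv G] (hτ : IsCStarDynamicalSystem ω τ)
    (hmix : IsWeaklyMixing ω τ) (hmeas : HasMeasurableCorrelations ω τ)
    (htr : ∀ a b, ω (a * b) = ω (b * a)) (hP : IsAsymptoticallyInvariant P l)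
    (hQ : IsAsymptoticallyInvariant Q l) (a b b' c : A) :
    Tendsto (fun i => ∫ h, ∫ g, ω (τ h c * τ g b' * τ (g * h) a * τ g b) ∂Q i ∂P i) l
      (𝓝 (ω (b * b') * ω a * ω c)) := by
  let x : G → A := fun h => τ h⁻¹ (b' * τ h a * b)
  have hx : ∀ h, ω (x h) = ω (b * b' * τ h a) := fun h => by
    rw [hτ.map_apply, htr, mul_assoc]
  have hxc : ∀ h g, ω (x h * τ g c) =
      ω (τ h c * τ g⁻¹ b' * τ (g⁻¹ * h) a * τ g⁻¹ b) := fun h g => by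
    have happly : τ (g⁻¹ * h) (x h * τ g c) = τ g⁻¹ b' * τ (g⁻¹ * h) a * τ g⁻¹ b * τ h c := by
      simp only [x, map_mul (τ _), starAlgAut_apply_apply, mul_inv_cancel_right,
        inv_mul_cancel_comm, inv_mul_cancel, mul_one]
    rw [← hτ.map_apply (g⁻¹ * h), happly, htr, ← mul_assoc, ← mul_assoc]
  have hxM : ∀ h, ‖x h‖ ≤ ‖b'‖ * ‖a‖ * ‖b‖ := fun h => by
    rw [StarAlgEquiv.norm_map]
    exact (norm_mul₃_le ..).trans_eq (by rw [StarAlgEquiv.norm_map])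
  have hinv : ∀ f : G → ℂ, ∀ i, ∫ g, f g ∂(Q i).inv = ∫ g, f g⁻¹ ∂Q i := fun f i =>
    integral_map_equiv (MeasurableEquiv.inv G) f
  have hlim := hτ.tendsto_integral_integral_apply_mul_apply hmix
    hP.eventually_isProbabilityMeasure hQ.inv hxM c
    (by simpa only [hx] using hτ.measurable_mul_apply (b * b') a)
    (by simpa only [hxc, map_one, mul_one, Function.comp_def, Pi.inv_apply] using
      (hmeas c b' a b 1).comp (measurable_fst.prodMk measurable_snd.inv))
    (by simpa only [hx] using hτ.tendsto_integral_apply_mul_apply hmix hP (b * b') a)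
  simpa only [hinv, hxc, inv_inv] using hlim

theorem tendsto_integral_integral_tripleProduct_one (hτ : IsCStarDynamicalSystem ω τ)
    (hmix : IsWeaklyMixing ω τ) (hmeas : HasMeasurableCorrelations ω τ)
    (htr : ∀ a b, ω (a * b) = ω (b * a)) (hP : IsAsymptoticallyInvariant P l)
    (hQ : IsAsymptoticallyInvariant Q l) (b c d : A) :
    Tendsto (fun i => ∫ h, ∫ g, ω (tripleProduct τ 1 b c (h, g) * d) ∂Q i ∂P i) l
      (𝓝 (ω b * ω c * ω d)) := by
  have hcycle : ∀ p : G × G, ω (tripleProduct τ 1 b c p * d) = ω (τ p.1 c * d * τ p.2 b) :=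
    fun p => by
      rw [tripleProduct, _root_.map_one (τ _), one_mul, mul_assoc, htr]
  have hxM : ∀ h, ‖τ h c * d‖ ≤ ‖c‖ * ‖d‖ := fun h =>
    (norm_mul_le _ _).trans_eq (by rw [StarAlgEquiv.norm_map])
  have hx : ∀ h, ω (τ h c * d) = ω (d * τ h c) := fun h => htr _ _
  have hlim := hτ.tendsto_integral_integral_apply_mul_apply hmix
    hP.eventually_isProbabilityMeasure hQ hxM b
    (by simpa only [hx] using hτ.measurable_mul_apply d c)
    (by simpa only [hcycle] using hmeas.measurable_apply_tripleProduct_mul htr 1 b c d)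
    (by simpa only [hx] using hτ.tendsto_integral_apply_mul_apply hmix hP d c)
  rw [show ω b * ω c * ω d = ω d * ω c * ω b by ring]
  simpa only [hcycle] using hlim

theorem eventually_sum_sum_norm_integral_tripleProduct_le [MeasurableInv G]
    (hτ : IsCStarDynamicalSystem ω τ) (hmix : IsWeaklyMixing ω τ)
    (hmeas : HasMeasurableCorrelations ω τ) (htr : ∀ a b, ω (a * b) = ω (b * a))
    (hP : IsAsymptoticallyInvariant P l) (hQ : IsAsymptoticallyInvariant Q l) {a : A}
    (ha : ω a = 0) (b c : A) {ε : ℝ} (hε : 0 < ε) :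
    ∃ (N : ℕ) (_ : NeZero N) (k : Fin N → G), ∀ᶠ i in l,
      ∑ m, ∑ n, ‖∫ h, ∫ g, ω (star (tripleProduct τ a b c (k m * h, g)) *
        tripleProduct τ a b c (k n * h, g)) ∂Q i ∂P i‖ ≤ ε * N ^ 2 := by
  obtain ⟨δ, hδ, hδε⟩ : ∃ δ > 0, (‖b‖ ^ 2 * ‖c‖ ^ 2 + 1) * δ = ε :=
    ⟨ε / (‖b‖ ^ 2 * ‖c‖ ^ 2 + 1), by positivity, by field_simp⟩
  obtain ⟨N, hN, k, hk⟩ := hτ.exists_sum_sum_norm_apply_star_mul_le hmix ha hδ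
  refine ⟨N, hN, k, ?_⟩
  simp only [apply_star_tripleProduct_mul_tripleProduct htr τ]
  have hlim := tendsto_finsetSum Finset.univ fun m _ => tendsto_finsetSum Finset.univ fun n _ =>
    (hτ.tendsto_integral_integral_correlation hmix hmeas htr hP hQ
      (star (τ (k m) a) * τ (k n) a) b (star b) (τ (k n) c * star (τ (k m) c))).norm
  refine (hlim.eventually (gt_mem_nhds ?_)).mono fun i hi => hi.le
  have hbb : ‖ω (b * star b)‖ ≤ ‖b‖ ^ 2 := by
    simpa [sq] using norm_apply_mul_le hτ.map_one b (star b)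
  have hcc : ∀ m n, ‖ω (τ (k n) c * star (τ (k m) c))‖ ≤ ‖c‖ ^ 2 := fun m n => by
    simpa only [sq, norm_star, StarAlgEquiv.norm_map] using
      norm_apply_mul_le hτ.map_one (τ (k n) c) (star (τ (k m) c))
  have hNpos : (0 : ℝ) < N := mod_cast NeZero.pos N
  calc ∑ m, ∑ n, ‖ω (b * star b) * ω (star (τ (k m) a) * τ (k n) a) *
        ω (τ (k n) c * star (τ (k m) c))‖
      ≤ ∑ m, ∑ n, ‖b‖ ^ 2 * ‖ω (star (τ (k m) a) * τ (k n) a)‖ * ‖c‖ ^ 2 := by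
        simp only [norm_mul]
        gcongr with m _ n _
        exact hcc m n
    _ = ‖b‖ ^ 2 * ‖c‖ ^ 2 * ∑ m, ∑ n, ‖ω (star (τ (k m) a) * τ (k n) a)‖ := by
        simp only [Finset.mul_sum, mul_right_comm]
    _ ≤ ‖b‖ ^ 2 * ‖c‖ ^ 2 * (δ * N ^ 2) := by gcongr
    _ < (‖b‖ ^ 2 * ‖c‖ ^ 2 + 1) * (δ * N ^ 2) := by
        gcongr
        exact lt_add_one _
    _ = ε * N ^ 2 := by rw [← hδε]; ring

theorem norm_integral_sum_integral_tripleProduct_sq_le (hτ : IsCStarDynamicalSystem ω τ)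
    (hmeas : HasMeasurableCorrelations ω τ) (htr : ∀ a b, ω (a * b) = ω (b * a))
    (P Q : Measure G) [IsProbabilityMeasure P] [IsProbabilityMeasure Q] {κ : Type*} [Fintype κ]
    (k : κ → G) (a b c d : A) :
    ‖∫ h, ∑ j, ∫ g, ω (tripleProduct τ a b c (k j * h, g) * d) ∂Q ∂P‖ ^ 2 ≤
      ‖d‖ ^ 2 * ∑ m, ∑ n, ‖∫ h, ∫ g, ω (star (tripleProduct τ a b c (k m * h, g)) *
        tripleProduct τ a b c (k n * h, g)) ∂Q ∂P‖ := by
  let v : κ → G × G → A := fun j p => tripleProduct τ a b c (k j * p.1, p.2)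
  have hd_int : ∀ j, Integrable (fun p => ω (v j p * d)) (P.prod Q) := fun j =>
    .of_bound ((hmeas.measurable_apply_tripleProduct_mul htr a b c d).comp
      (by fun_prop)).aestronglyMeasurable _
      (.of_forall fun p => norm_apply_tripleProduct_mul_le hτ.map_one a b c d _)
  have hgram_meas : ∀ m n, Measurable fun p => ω (star (v m p) * v n p) := fun m n => by
    simpa only [v, apply_star_tripleProduct_mul_tripleProduct htr τ, mul_one] using
      hmeas _ _ _ b 1
  have hgram_int : ∀ m n, Integrable (fun p => ω (star (v m p) * v n p)) (P.prod Q) :=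
    fun m n => .of_bound (hgram_meas m n).aestronglyMeasurable
      ((‖a‖ * ‖b‖ * ‖c‖) * (‖a‖ * ‖b‖ * ‖c‖))
      (.of_forall fun p => (norm_apply_star_mul_le hτ.map_one _ _).trans
        (by gcongr <;> exact norm_tripleProduct_le ..))
  have hvdC := norm_integral_sum_apply_mul_sq_le hτ.map_one (P := P.prod Q) d (v := v)
    (fun j => by simpa only [htr d] using (hd_int j).aestronglyMeasurable) hgram_int
  simp only [htr d, integral_finsetSum _ fun j _ => hd_int j, integral_prod _ (hd_int _),
    integral_prod _ (hgram_int _ _)] at hvdC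
  rwa [integral_finsetSum _ fun j _ => (hd_int j).integral_prod_left]

theorem tendsto_integral_integral_tripleProduct_of_apply_eq_zero [MeasurableInv G]
    (hτ : IsCStarDynamicalSystem ω τ) (hmix : IsWeaklyMixing ω τ)
    (hmeas : HasMeasurableCorrelations ω τ) (htr : ∀ a b, ω (a * b) = ω (b * a))
    (hP : IsAsymptoticallyInvariant P l) (hQ : IsAsymptoticallyInvariant Q l) {a : A}
    (ha : ω a = 0) (b c d : A) :
    Tendsto (fun i => ∫ h, ∫ g, ω (tripleProduct τ a b c (h, g) * d) ∂Q i ∂P i) l (𝓝 0) := by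
  refine Metric.tendsto_nhds.2 fun ε hε => ?_
  set M := ‖a‖ * ‖b‖ * ‖c‖ * ‖d‖
  have hM : 0 ≤ M := by positivity
  obtain ⟨δ, hδ, hδε⟩ : ∃ δ > 0, δ * (‖d‖ + M + 1) = ε :=
    ⟨ε / (‖d‖ + M + 1), by positivity, by field_simp⟩
  obtain ⟨N, _, k, hgram⟩ := hτ.eventually_sum_sum_norm_integral_tripleProduct_le hmix hmeas htr
    hP hQ ha b c (pow_pos hδ 2)
  filter_upwards [hgram, hP.eventually_isProbabilityMeasure, hQ.eventually_isProbabilityMeasure,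
    hP.eventually_norm_integral_le k hδ] with i hi _ _ htranslates
  have hFmeas : Measurable fun h => ∫ g, ω (tripleProduct τ a b c (h, g) * d) ∂Q i :=
    (hmeas.measurable_apply_tripleProduct_mul htr a b c d).stronglyMeasurable
      |>.integral_prod_right.measurable
  have hFbound : ∀ h, ‖∫ g, ω (tripleProduct τ a b c (h, g) * d) ∂Q i‖ ≤ M := fun h =>
    norm_integral_le_of_forall_norm_le fun g =>
      norm_apply_tripleProduct_mul_le hτ.map_one a b c d (h, g)
  have hvdC : ‖∫ h, ∑ j, ∫ g, ω (tripleProduct τ a b c (k j * h, g) * d) ∂Q i ∂P i‖ ≤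
      ‖d‖ * (δ * N) := by
    refine le_of_sq_le_sq ?_ (by positivity)
    calc _ ≤ ‖d‖ ^ 2 * (δ ^ 2 * N ^ 2) :=
          (hτ.norm_integral_sum_integral_tripleProduct_sq_le hmeas htr (P i) (Q i) k a b c d).trans
            (by gcongr)
      _ = (‖d‖ * (δ * N)) ^ 2 := by ring
  have hN : (0 : ℝ) < N := mod_cast NeZero.pos N
  rw [dist_zero_right]
  calc ‖∫ h, ∫ g, ω (tripleProduct τ a b c (h, g) * d) ∂Q i ∂P i‖
      ≤ ‖∫ h, ∑ j, ∫ g, ω (tripleProduct τ a b c (k j * h, g) * d) ∂Q i ∂P i‖ /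
          Fintype.card (Fin N) + δ * M := htranslates _ _ hFmeas hFbound
    _ ≤ ‖d‖ * (δ * N) / N + δ * M := by rw [Fintype.card_fin]; gcongr
    _ = δ * (‖d‖ + M) := by field_simp
    _ < δ * (‖d‖ + M + 1) := mul_lt_mul_of_pos_left (lt_add_one _) hδ
    _ = ε := hδε

theorem tendsto_integral_integral_tripleProduct [MeasurableInv G]
    (hτ : IsCStarDynamicalSystem ω τ) (hmix : IsWeaklyMixing ω τ)
    (hmeas : HasMeasurableCorrelations ω τ) (htr : ∀ a b, ω (a * b) = ω (b * a))
    (hP : IsAsymptoticallyInvariant P l) (hQ : IsAsymptoticallyInvariant Q l) (a b c d : A) :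
    Tendsto (fun i => ∫ h, ∫ g, ω (tripleProduct τ a b c (h, g) * d) ∂Q i ∂P i) l
      (𝓝 (ω a * ω b * ω c * ω d)) := by
  let a₀ := a - ω a • 1
  have ha₀ : ω a₀ = 0 := by simp [a₀, hτ.map_one]
  have hsplit : ∀ p, ω (tripleProduct τ a₀ b c p * d) + ω a * ω (tripleProduct τ 1 b c p * d) =
      ω (tripleProduct τ a b c p * d) := fun p => by
    simp [tripleProduct, a₀, sub_mul]
  have hlim := (hτ.tendsto_integral_integral_tripleProduct_of_apply_eq_zero hmix hmeas htr hP hQ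
    ha₀ b c d).add
      ((hτ.tendsto_integral_integral_tripleProduct_one hmix hmeas htr hP hQ b c d).const_mul (ω a))
  rw [zero_add, ← mul_assoc, ← mul_assoc] at hlim
  refine hlim.congr' ?_
  filter_upwards [hP.eventually_isProbabilityMeasure, hQ.eventually_isProbabilityMeasure]
    with i _ _
  have hint : ∀ a', Integrable (fun p => ω (tripleProduct τ a' b c p * d)) ((P i).prod (Q i)) :=
    fun a' => .of_bound
      (hmeas.measurable_apply_tripleProduct_mul htr a' b c d).aestronglyMeasurable _
      (.of_forall fun p => norm_apply_tripleProduct_mul_le hτ.map_one a' b c d p)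
  simp only [← integral_prod _ (hint _)]
  rw [← integral_const_mul, ← integral_add (hint a₀) ((hint 1).const_mul (ω a))]
  simp only [hsplit]

end IsCStarDynamicalSystem

end DynamicalSystem

theorem isMulLeftInvariant_of_measure_singleton_mul {G : Type*} [Group G] [MeasurableSpace G]
    [MeasurableMul G] {μ : Measure G}
    (h : ∀ (V : Set G) (g : G), MeasurableSet V → μ ({g} * V) = μ V) : μ.IsMulLeftInvariant where
  map_mul_left_eq_self g := by
    ext V hV
    rw [Measure.map_apply (measurable_const_mul g) hV, ← Set.image_mul_left', ← h V g⁻¹ hV,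
      Set.singleton_mul]

theorem isFoelner_of_tendsto_toReal {G : Type*} [CommGroup G] [MeasurableSpace G]
    {μ : Measure G} [μ.IsMulLeftInvariant] {ι : Type*} {l : Filter ι}
    {Λ : ι → Set G} (hmeas : ∀ i, MeasurableSet (Λ i))
    (hfin : ∀ᶠ i in l, 0 < μ (Λ i) ∧ μ (Λ i) < ⊤)
    (hlim : ∀ g : G, Tendsto
      (fun i => (μ (symmDiff (Λ i) (Λ i * {g}))).toReal / (μ (Λ i)).toReal) l (𝓝 0)) :
    IsFoelner G μ l Λ where
  eventually_measurableSet := .of_forall hmeas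
  eventually_meas_ne_zero := hfin.mono fun _ h => h.1.ne'
  eventually_meas_ne_top := hfin.mono fun _ h => h.2.ne
  tendsto_meas_smul_symmDiff g := by
    have htranslate : ∀ i, Λ i * {g} = g • Λ i := fun i =>
      (mul_comm _ _).trans Set.singleton_smul
    have hofReal := ENNReal.tendsto_ofReal (hlim g)
    rw [ENNReal.ofReal_zero] at hofReal
    refine hofReal.congr' (hfin.mono fun i h => ?_)
    have htop : μ (symmDiff (g • Λ i) (Λ i)) / μ (Λ i) ≠ ⊤ :=
      ENNReal.div_ne_top (measure_symmDiff_ne_top (by rw [measure_smul]; exact h.2.ne) h.2.ne)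
        h.1.ne'
    rw [htranslate, symmDiff_comm, ← ENNReal.toReal_div, ENNReal.ofReal_toReal htop]

theorem hasMeasurableCorrelations_of_measurable_prod {A G : Type*} [CStarAlgebra A] [CommGroup G]
    [MeasurableSpace G] {ω : A → ℂ} {τ : G → (A ≃⋆ₐ[ℂ] A)} (hτ_one : ∀ a, τ 1 a = a)
    (hmeas : ∀ a₁ a₂ a₃ a₄ a₅ a₆ : A, Measurable fun q : (G × G) × (G × G) =>
      ω (τ q.1.2 a₁ * τ q.1.1 a₂ * τ (q.1.1 * q.1.2) a₃ *
        τ (q.2.1 * q.2.2) a₄ * τ q.2.1 a₅ * τ q.2.2 a₆)) :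
    HasMeasurableCorrelations ω τ := fun a₁ a₂ a₃ a₄ a₅ => by
  simpa only [Function.comp_def, mul_one, map_one, hτ_one, Prod.fst, Prod.snd] using
    (hmeas a₁ a₂ a₃ a₄ 1 a₅).comp
      ((measurable_snd.prodMk measurable_fst).prodMk
        (measurable_snd.prodMk (measurable_const (a := 1))))

theorem bergelson_weakly_mixing_general {A : Type*} [CStarAlgebra A]
    (ω : A →ₗ[ℂ] ℂ) (hω_pos : ∀ a, 0 ≤ ω (star a * a)) (hω_one : ω 1 = 1)
    (hω_tracial : ∀ a b, ω (a * b) = ω (b * a))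
    {G : Type*} [CommGroup G] [MeasurableSpace G] [MeasurableMul G] [MeasurableInv G]
    {μ : Measure G} [μ.IsMulLeftInvariant]
    (τ : G →* (A ≃⋆ₐ[ℂ] A)) (hω_inv : ∀ g a, ω (τ g a) = ω a)
    (hτ_meas : ∀ a b, Measurable fun g => ω (a * τ g b))
    (hmeas : HasMeasurableCorrelations ω τ)
    {κ : Type*} {m : Filter κ} [m.NeBot] {Λ : κ → Set G}
    (hΛ : ∀ᶠ n in m, 0 < μ (Λ n) ∧ μ (Λ n) < ⊤)
    (hmix : ∀ a b, Tendsto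
      (fun n => (μ (Λ n)).toReal⁻¹ * ∫ g in Λ n, ‖ω (a * τ g b) - ω a * ω b‖ ∂μ) m (𝓝 0))
    {ι : Type*} {l : Filter ι} {Λ₁ Λ₂ : ι → Set G} (hΛ₁ : IsFoelner G μ l Λ₁)
    (hΛ₂ : IsFoelner G μ l Λ₂) (a b c d : A) :
    Tendsto (fun n => ((μ (Λ₁ n)).toReal * (μ (Λ₂ n)).toReal)⁻¹ •
      ∫ h in Λ₁ n, ∫ g in Λ₂ n, ω (τ (g * h) a * τ g b * τ h c * d) ∂μ ∂μ) l
      (𝓝 (ω a * ω b * ω c * ω d)) := by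
  have hmix_average : ∀ a b,
      Tendsto (fun n => ⨍ g in Λ n, ‖ω (a * τ g b) - ω a * ω b‖ ∂μ) m (𝓝 0) := by
    simpa only [setAverage_eq, measureReal_def, smul_eq_mul] using hmix
  let _ := CStarAlgebra.spectralOrder A
  have := CStarAlgebra.spectralOrderedRing A
  let φ : A →ₚ[ℂ] ℂ := .mk₀ ω fun x hx => by
    obtain ⟨y, rfl⟩ := CStarAlgebra.nonneg_iff_eq_star_mul_self.1 hx
    exact hω_pos y
  have hτ : IsCStarDynamicalSystem φ τ := ⟨hω_one, hω_inv, hτ_meas⟩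
  have hφmix : IsWeaklyMixing φ τ := hτ.isWeaklyMixing_of_tendsto_setAverage
    (hΛ.mono fun _ h => h.1.ne') (hΛ.mono fun _ h => h.2.ne) hmix_average
  have hlim := hτ.tendsto_integral_integral_tripleProduct hφmix hmeas hω_tracial
    (isAsymptoticallyInvariant_cond_of_isFoelner hΛ₁)
    (isAsymptoticallyInvariant_cond_of_isFoelner hΛ₂) a b c d
  simp only [integral_cond] at hlim
  simp only [setAverage_eq, integral_smul, smul_smul, measureReal_def, ← mul_inv] at hlim
  exact hlim

/-- **Theorem 5.6(1): Bergelson's theorem for weakly mixing C*-dynamical systems.** -/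
theorem bergelson_weakly_mixing
    -- a unital C*-algebra A
    {A : Type*} [NormedRing A] [StarRing A] [CStarRing A] [NormedAlgebra ℂ A]
    [CompleteSpace A] [StarModule ℂ A]
    -- a tracial state ω on A
    (ω : A →ₗ[ℂ] ℂ) (hω_pos : ∀ a : A, 0 ≤ ω (star a * a)) (hω_one : ω 1 = 1)
    (hω_tracial : ∀ a b : A, ω (a * b) = ω (b * a))
    -- a second countable topological abelian group G with a σ-finite, right and left
    -- invariant measure μ on its Borel σ-algebra, with the inverse map μ-invariant
    {G : Type*} [CommGroup G] [TopologicalSpace G] [IsTopologicalGroup G]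
    [SecondCountableTopology G] [MeasurableSpace G] [BorelSpace G]
    (μ : Measure G) [SigmaFinite μ]
    (hRight : ∀ (V : Set G) (g : G), MeasurableSet V → μ (V * {g}) = μ V)
    (hLeft : ∀ (V : Set G) (g : G), MeasurableSet V → μ ({g} * V) = μ V)
    (hInvInv : ∀ V : Set G, MeasurableSet V → μ V⁻¹ = μ V)
    -- the action τ, making (A, ω, τ, G) a C*-dynamical system
    (τ : G → A ≃⋆ₐ[ℂ] A)
    (hτ_one : ∀ a : A, τ 1 a = a)
    (hτ_mul : ∀ g h a, τ g (τ h a) = τ (g * h) a)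
    (hω_inv : ∀ g a, ω (τ g a) = ω a)
    (hτ_meas : ∀ a b : A, Measurable fun g : G => ω (a * τ g b))
    -- the system is weakly mixing (w.r.t. some, equivalently every, Følner sequence in G)
    (hWM : ∃ Λ : ℕ → Set G, (∀ n, MeasurableSet (Λ n)) ∧
      (∀ᶠ n in atTop, 0 < μ (Λ n) ∧ μ (Λ n) < ⊤) ∧
      (∀ g : G, Tendsto
        (fun n => (μ (symmDiff (Λ n) (Λ n * {g}))).toReal / (μ (Λ n)).toReal)
        atTop (𝓝 0)) ∧
      ∀ a b : A, Tendsto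
        (fun n => (μ (Λ n)).toReal⁻¹ * ∫ g in Λ n, ‖ω (a * τ g b) - ω a * ω b‖ ∂μ)
        atTop (𝓝 0))
    -- (g,h,j,k) ↦ ω(τ_h(a₁) τ_g(a₂) τ_{gh}(a₃) τ_{jk}(a₄) τ_j(a₅) τ_k(a₆)) is
    -- Σ² × Σ²-measurable
    (hmeas6 : ∀ a₁ a₂ a₃ a₄ a₅ a₆ : A, Measurable fun q : (G × G) × (G × G) =>
      ω (τ q.1.2 a₁ * τ q.1.1 a₂ * τ (q.1.1 * q.1.2) a₃ *
        τ (q.2.1 * q.2.2) a₄ * τ q.2.1 a₅ * τ q.2.2 a₆))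
    -- a uniform Følner sequence (Λ1 n) in G ...
    (Λ1 : ℕ → Set G)
    (hΛ1meas : ∀ n, MeasurableSet (Λ1 n))
    (hΛ1fin : ∀ᶠ n in atTop, 0 < μ (Λ1 n) ∧ μ (Λ1 n) < ⊤)
    (hΛ1folner : ∀ g : G, Tendsto
      (fun n => (μ (symmDiff (Λ1 n) (Λ1 n * {g}))).toReal / (μ (Λ1 n)).toReal)
      atTop (𝓝 0))
    (hΛ1unif : ∀ᶠ m in atTop, ∀ ε > (0 : ℝ), ∀ᶠ n in atTop, ∀ g ∈ Λ1 m,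
      (μ (symmDiff (Λ1 n) (Λ1 n * {g}))).toReal ≤ ε * (μ (Λ1 n)).toReal)
    -- ... satisfying the Tempel'man condition ...
    (hΛ1temp : ∃ c : ℝ, 0 < c ∧ ∀ᶠ n in atTop, MeasurableSet ((Λ1 n)⁻¹ * Λ1 n) ∧
      μ ((Λ1 n)⁻¹ * Λ1 n) ≤ ENNReal.ofReal c * μ (Λ1 n))
    -- ... and such that (Λ1 n⁻¹ Λ1 n) is also Følner in G
    (hΛ1invfin : ∀ᶠ n in atTop, 0 < μ ((Λ1 n)⁻¹ * Λ1 n) ∧ μ ((Λ1 n)⁻¹ * Λ1 n) < ⊤)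
    (hΛ1invfolner : ∀ g : G, Tendsto
      (fun n => (μ (symmDiff ((Λ1 n)⁻¹ * Λ1 n) (((Λ1 n)⁻¹ * Λ1 n) * {g}))).toReal /
        (μ ((Λ1 n)⁻¹ * Λ1 n)).toReal)
      atTop (𝓝 0))
    -- a uniform Følner sequence (Λ2 n) in G ...
    (Λ2 : ℕ → Set G)
    (hΛ2meas : ∀ n, MeasurableSet (Λ2 n))
    (hΛ2fin : ∀ᶠ n in atTop, 0 < μ (Λ2 n) ∧ μ (Λ2 n) < ⊤)
    (hΛ2folner : ∀ g : G, Tendsto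
      (fun n => (μ (symmDiff (Λ2 n) (Λ2 n * {g}))).toReal / (μ (Λ2 n)).toReal)
      atTop (𝓝 0))
    (hΛ2unif : ∀ᶠ m in atTop, ∀ ε > (0 : ℝ), ∀ᶠ n in atTop, ∀ g ∈ Λ2 m,
      (μ (symmDiff (Λ2 n) (Λ2 n * {g}))).toReal ≤ ε * (μ (Λ2 n)).toReal)
    -- ... satisfying the Tempel'man condition ...
    (hΛ2temp : ∃ c : ℝ, 0 < c ∧ ∀ᶠ n in atTop, MeasurableSet ((Λ2 n)⁻¹ * Λ2 n) ∧
      μ ((Λ2 n)⁻¹ * Λ2 n) ≤ ENNReal.ofReal c * μ (Λ2 n))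
    -- ... and such that (Λ2 n⁻¹ Λ2 n) is also Følner in G
    (hΛ2invfin : ∀ᶠ n in atTop, 0 < μ ((Λ2 n)⁻¹ * Λ2 n) ∧ μ ((Λ2 n)⁻¹ * Λ2 n) < ⊤)
    (hΛ2invfolner : ∀ g : G, Tendsto
      (fun n => (μ (symmDiff ((Λ2 n)⁻¹ * Λ2 n) (((Λ2 n)⁻¹ * Λ2 n) * {g}))).toReal /
        (μ ((Λ2 n)⁻¹ * Λ2 n)).toReal)
      atTop (𝓝 0))
    -- the system is asymptotically abelian with respect to (Λ1 n)
    (hcomm_meas : ∀ a b : A, Measurable fun g : G => ‖a * τ g b - τ g b * a‖)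
    (hAA : ∀ a b : A, Tendsto
      (fun n => (μ (Λ1 n)).toReal⁻¹ * ∫ g in Λ1 n, ‖a * τ g b - τ g b * a‖ ∂μ)
      atTop (𝓝 0))
 :
    -- conclusion
    ∀ a b c d : A,
      Tendsto
        (fun n => ((μ (Λ1 n)).toReal * (μ (Λ2 n)).toReal)⁻¹ •
          ∫ h in Λ1 n, ∫ g in Λ2 n, ω (τ (g * h) a * τ g b * τ h c * d) ∂μ ∂μ)
        atTop (𝓝 (ω a * ω b * ω c * ω d)) := by
  let _ : CStarAlgebra A := {}
  have := isMulLeftInvariant_of_measure_singleton_mul hLeft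
  obtain ⟨Λ, -, hΛ, -, hmix⟩ := hWM
  exact bergelson_weakly_mixing_general ω hω_pos hω_one hω_tracial
    (.mk' τ fun g h => StarAlgEquiv.ext fun a => (hτ_mul g h a).symm) hω_inv hτ_meas
    (hasMeasurableCorrelations_of_measurable_prod hτ_one hmeas6) hΛ hmix
    (isFoelner_of_tendsto_toReal hΛ1meas hΛ1fin hΛ1folner)
    (isFoelner_of_tendsto_toReal hΛ2meas hΛ2fin hΛ2folner)
end

section
/- (uniform Bergelson's theorem for weakly mixing C*-dynamical systems) Let (A,ω,τ,G) be a weakly mixing C*-dynamical system with ω tracial, where G is a countable second countable topological group, Σ its Borel σ-algebra, μ the counting measure, and (g,h,j,k) ↦ ω(τ_h(a₁) τ_g(a₂) τ_{gh}(a₃) τ_{jk}(a₄) τ_j(a₅) τ_k(a₆)) is Σ² × Σ²-measurable for all a₁,...,a₆ ∈ A. Assume there exist uniform Følner sequences (Λ_{1,n}) and (Λ_{2,n}) in G satisfying the Tempel'man condition and such that (Λ_{1,n}⁻¹Λ_{1,n}) and (Λ_{2,n}⁻¹Λ_{2,n}) are also Følner in G. If (A,ω,τ,G) is uniformly asymptotically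 abelian with respect to (Λ_{1,n}), then lim_{n→∞} sup_{g₁,g₂ ∈ G} | (1/(μ(Λ_{1,n})μ(Λ_{2,n}))) Σ_{h ∈ Λ_{1,n}g₁} Σ_{g ∈ Λ_{2,n}g₂} ω(τ_{gh}(a) τ_g(b) τ_h(c) d) − ω(a)ω(b)ω(c)ω(d) | = 0 for all a, b, c, d ∈ A. -/
open MeasureTheory Filter Topology
open scoped Pointwise ComplexOrder

/-!
If `ω y = 0`, weak mixing provides finite sets `K` for which the translates `τ k y`, `k ∈ K`, are
pairwise almost orthogonal in the tracial 2-norm, so that the average of `y` over `K` is small.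
A Følner average is almost unchanged by a further average over `K`, whence the mean ergodic theorem:
Følner averages of `y` converge to `ω y • 1` in the 2-norm.

For the double average one may assume `ω a = 0`. Since
`τ (g * h) a * τ g b * τ h c * d = τ g (τ h a * b) * (τ h c * d)`, it is enough that the Følner
average over `g` of `τ h a * b` is small in the 2-norm for most `h`. As before, that average may be
replaced by the one over a finite set `K`; by the trace property the squares of the resulting
2-norms are sums of correlations `ω (x * τ h y)`, whose averages over `h` factor by the ergodic
theorem and are then small because the `τ k a`, `k ∈ K`, are almost orthogonal.

Uniformity in the translates `g₁, g₂` costs nothing: translates of Følner sets indexed by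
`(n, g₁, g₂)` are again Følner, along the filter `atTop ×ˢ ⊤`.
-/

open Finset
open scoped BigOperators symmDiff

section MeanErgodic

variable {𝕜 E G ι : Type*} [RCLike 𝕜] [AddCommGroup E] [Module 𝕜 E]

theorem seminorm_inv_card_smul_sum_le (p : Seminorm 𝕜 E) (S : Finset ι) (f : ι → E) :
    p ((#S : 𝕜)⁻¹ • ∑ i ∈ S, f i) ≤ 𝔼 i ∈ S, p (f i) := by
  rw [map_smul_eq_mul, norm_inv, RCLike.norm_natCast, expect_eq_sum_div_card, div_eq_inv_mul]
  gcongr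
  exact le_sum_of_subadditive p (map_zero p).le (map_add_le_add p) S f

/-- The average `(#S)⁻¹ • ∑ g ∈ S, ρ g` of a representation over a finite set `S`
(the zero map when `S` is empty). -/
noncomputable def orbitAverage [Monoid G] (ρ : Representation 𝕜 G E) (S : Finset G) : E →ₗ[𝕜] E :=
  (#S : 𝕜)⁻¹ • ∑ g ∈ S, ρ g

theorem orbitAverage_apply [Monoid G] (ρ : Representation 𝕜 G E) (S : Finset G) (x : E) :
    orbitAverage ρ S x = (#S : 𝕜)⁻¹ • ∑ g ∈ S, ρ g x := by
  simp only [orbitAverage, LinearMap.smul_apply, LinearMap.sum_apply]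

theorem map_orbitAverage_eq_expect [Monoid G] (ρ : Representation 𝕜 G E) (f : E →ₗ[𝕜] 𝕜)
    (S : Finset G) (x : E) : f (orbitAverage ρ S x) = 𝔼 g ∈ S, f (ρ g x) := by
  rw [orbitAverage_apply, map_smul, map_sum, expect_eq_sum_div_card, smul_eq_mul, div_eq_inv_mul]

theorem orbitAverage_of_fixed [Monoid G] (ρ : Representation 𝕜 G E) {S : Finset G}
    (hS : S.Nonempty) {x : E} (hx : ∀ g, ρ g x = x) : orbitAverage ρ S x = x := by
  have hcard : (#S : 𝕜) ≠ 0 := Nat.cast_ne_zero.mpr hS.card_ne_zero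
  simp only [orbitAverage_apply, hx, sum_const, ← Nat.cast_smul_eq_nsmul 𝕜, smul_smul,
    inv_mul_cancel₀ hcard, one_smul]

theorem orbitAverage_commute [CommMonoid G] (ρ : Representation 𝕜 G E) (S T : Finset G) :
    Commute (orbitAverage ρ S) (orbitAverage ρ T) :=
  ((Commute.sum_left _ _ _ fun g _ => Commute.sum_right _ _ _ fun h _ =>
    (Commute.all g h).map ρ).smul_left _).smul_right _

theorem seminorm_orbitAverage_le [Monoid G] (ρ : Representation 𝕜 G E) (p : Seminorm 𝕜 E)
    (hp : ∀ g x, p (ρ g x) = p x) (S : Finset G) (x : E) : p (orbitAverage ρ S x) ≤ p x := by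
  rcases S.eq_empty_or_nonempty with rfl | hS
  · simp [orbitAverage]
  · calc p (orbitAverage ρ S x) ≤ 𝔼 g ∈ S, p (ρ g x) := by
          rw [orbitAverage_apply]; exact seminorm_inv_card_smul_sum_le p S _
      _ = p x := by simp only [hp, expect_const hS]

theorem seminorm_orbitAverage_sub_self_le [Monoid G] (ρ : Representation 𝕜 G E) (p : Seminorm 𝕜 E)
    {K : Finset G} (hK : K.Nonempty) (y : E) :
    p (orbitAverage ρ K y - y) ≤ 𝔼 k ∈ K, p (ρ k y - y) := by
  have hcard : (#K : 𝕜) ≠ 0 := Nat.cast_ne_zero.mpr hK.card_ne_zero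
  have hsum : orbitAverage ρ K y - y = (#K : 𝕜)⁻¹ • ∑ k ∈ K, (ρ k y - y) := by
    simp only [orbitAverage_apply, sum_sub_distrib, sum_const, smul_sub,
      ← Nat.cast_smul_eq_nsmul 𝕜, smul_smul, inv_mul_cancel₀ hcard, one_smul]
  rw [hsum]
  exact seminorm_inv_card_smul_sum_le p K _

variable [DecidableEq G]

theorem seminorm_orbitAverage_translate_sub_le [Group G] (ρ : Representation 𝕜 G E)
    (p : Seminorm 𝕜 E) (hp : ∀ g x, p (ρ g x) = p x) (S : Finset G) (k : G) (x : E) :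
    p (ρ k (orbitAverage ρ S x) - orbitAverage ρ S x) ≤ #((k • S) ∆ S) / #S * p x := by
  have htranslate : ρ k (∑ g ∈ S, ρ g x) = ∑ g ∈ k • S, ρ g x := by
    rw [map_sum, ← image_smul, sum_image (MulAction.injective k).injOn]
    simp only [smul_eq_mul, map_mul, Module.End.mul_apply]
  have hsum_le (T : Finset G) : p (∑ g ∈ T, ρ g x) ≤ #T * p x :=
    (le_sum_of_subadditive p (map_zero p).le (map_add_le_add p) T _).trans_eq
      (by simp only [hp, sum_const, nsmul_eq_mul])
  have hcard : #((k • S) ∆ S) = #((k • S) \ S) + #(S \ (k • S)) :=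
    card_union_of_disjoint disjoint_sdiff_sdiff
  rw [orbitAverage_apply, map_smul, ← smul_sub, htranslate, ← sum_sdiff_sub_sum_sdiff,
    map_smul_eq_mul, norm_inv, RCLike.norm_natCast, div_mul_eq_mul_div, div_eq_inv_mul, hcard,
    Nat.cast_add, add_mul]
  gcongr
  exact (map_sub_le_add p _ _).trans (add_le_add (hsum_le _) (hsum_le _))

theorem seminorm_orbitAverage_le_add [CommGroup G] (ρ : Representation 𝕜 G E) (p : Seminorm 𝕜 E)
    (hp : ∀ g x, p (ρ g x) = p x) (S : Finset G) {K : Finset G} (hK : K.Nonempty) (x : E) :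
    p (orbitAverage ρ S x) ≤
      (𝔼 k ∈ K, (#((k • S) ∆ S) / #S : ℝ)) * p x + p (orbitAverage ρ K x) := by
  set y := orbitAverage ρ S x
  have hcomm : orbitAverage ρ K y = orbitAverage ρ S (orbitAverage ρ K x) :=
    congrArg (· x) (orbitAverage_commute ρ K S).eq
  calc p y = p ((y - orbitAverage ρ K y) + orbitAverage ρ K y) := by rw [sub_add_cancel]
    _ ≤ p (y - orbitAverage ρ K y) + p (orbitAverage ρ K y) := map_add_le_add p _ _
    _ ≤ (𝔼 k ∈ K, (#((k • S) ∆ S) / #S : ℝ)) * p x + p (orbitAverage ρ K x) := ?_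
  gcongr
  · rw [map_sub_rev, expect_mul]
    exact (seminorm_orbitAverage_sub_self_le ρ p hK y).trans
      (expect_le_expect fun k _ => seminorm_orbitAverage_translate_sub_le ρ p hp S k x)
  · rw [hcomm]
    exact seminorm_orbitAverage_le ρ p hp S _

/-- The Følner condition for a family of finite subsets of a group along a filter; unlike
`IsFoelner` it does not involve a `MeasurableSpace`. -/
structure IsFolnerFinset [Group G] (l : Filter ι) (S : ι → Finset G) : Prop where
  eventually_nonempty : ∀ᶠ i in l, (S i).Nonempty
  tendsto_card_smul_symmDiff (g : G) :
    Tendsto (fun i => (#((g • S i) ∆ S i) / #(S i) : ℝ)) l (𝓝 0)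

variable {l : Filter ι} {S : ι → Finset G}

theorem IsFolnerFinset.tendsto_expect_card_smul_symmDiff [Group G] (hS : IsFolnerFinset l S)
    (K : Finset G) : Tendsto (fun i => 𝔼 k ∈ K, (#((k • S i) ∆ S i) / #(S i) : ℝ)) l (𝓝 0) := by
  simpa only [expect_eq_sum_div_card, sum_const_zero, zero_div] using
    (tendsto_finsetSum K fun k _ => hS.tendsto_card_smul_symmDiff k).div_const (#K : ℝ)

theorem tendsto_zero_of_forall_le {u : ι → ℝ} (h0 : ∀ i, 0 ≤ u i)
    (h : ∀ ε > 0, ∃ v : ι → ℝ, (∀ᶠ i in l, u i ≤ v i) ∧ ∃ c ≤ ε, Tendsto v l (𝓝 c)) :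
    Tendsto u l (𝓝 0) := by
  rw [Metric.tendsto_nhds]
  intro ε hε
  obtain ⟨v, huv, c, hc, hv⟩ := h (ε / 2) (half_pos hε)
  filter_upwards [huv, hv.eventually (gt_mem_nhds (hc.trans_lt (half_lt_self hε)))] with i hi hi'
  rw [Real.dist_0_eq_abs, abs_of_nonneg (h0 i)]
  exact hi.trans_lt hi'

/-- One finite set over which the average is small suffices,
since Følner averages are almost unchanged by a further finite averaging. -/
theorem IsFolnerFinset.tendsto_orbitAverage_zero [CommGroup G] (hS : IsFolnerFinset l S)
    (ρ : Representation 𝕜 G E) (p : Seminorm 𝕜 E) (hp : ∀ g x, p (ρ g x) = p x) {x : E}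
    (hx : ∀ ε > 0, ∃ K : Finset G, K.Nonempty ∧ p (orbitAverage ρ K x) ≤ ε) :
    Tendsto (fun i => p (orbitAverage ρ (S i) x)) l (𝓝 0) := by
  refine tendsto_zero_of_forall_le (fun _ => apply_nonneg p _) fun ε hε => ?_
  obtain ⟨K, hK, hKx⟩ := hx ε hε
  refine ⟨_, .of_forall fun i => seminorm_orbitAverage_le_add ρ p hp (S i) hK x, _, hKx, ?_⟩
  simpa only [zero_mul, zero_add] using
    ((hS.tendsto_expect_card_smul_symmDiff K).mul_const (p x)).add_const _

end MeanErgodic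

section TwoNorm

variable {A : Type*} [CStarAlgebra A] [PartialOrder A] [StarOrderedRing A] (ω : A →ₚ[ℂ] ℂ)

/-- The GNS seminorm `x ↦ ω (star x * x) ^ (1 / 2)` of a positive linear functional, as a seminorm
on the algebra itself. -/
noncomputable def twoNorm : Seminorm ℂ A :=
  (normSeminorm ℂ ω.PreGNS).comp ω.toPreGNS.toLinearMap

theorem twoNorm_sq (x : A) : twoNorm ω x ^ 2 = (ω (star x * x)).re :=
  mod_cast congrArg Complex.re (ω.preGNS_norm_sq (ω.toPreGNS x))

theorem norm_map_star_mul_le (x y : A) : ‖ω (star x * y)‖ ≤ twoNorm ω x * twoNorm ω y :=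
  norm_inner_le_norm (ω.toPreGNS x) (ω.toPreGNS y)

theorem twoNorm_mul_le (x y : A) : twoNorm ω (x * y) ≤ ‖x‖ * twoNorm ω y :=
  (ω.leftMulMapPreGNS x).le_of_opNorm_le (LinearMap.mkContinuous_norm_le _ (norm_nonneg x) _)
    (ω.toPreGNS y)

theorem norm_map_star_mul_comm (x y : A) : ‖ω (star x * y)‖ = ‖ω (star y * x)‖ := by
  rw [← norm_star, ← map_star ω, star_mul, star_star]

variable {ω}

theorem twoNorm_one (hω : ω 1 = 1) : twoNorm ω 1 = 1 := by
  rw [← pow_eq_one_iff_of_nonneg (apply_nonneg _ _) two_ne_zero, twoNorm_sq, star_one, one_mul, hω,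
    Complex.one_re]

theorem twoNorm_le_norm (hω : ω 1 = 1) (x : A) : twoNorm ω x ≤ ‖x‖ := by
  simpa only [mul_one, twoNorm_one hω] using twoNorm_mul_le ω x 1

end TwoNorm

theorem expect_expect_le_of_pairwise {α : Type*} {K : Finset α}
    {c : α → α → ℝ} {M δ : ℝ} (hδ : 0 ≤ δ) (hdiag : ∀ k ∈ K, c k k ≤ M)
    (hoff : (K : Set α).Pairwise fun k k' => c k k' ≤ δ) :
    𝔼 k ∈ K, 𝔼 k' ∈ K, c k k' ≤ M / #K + δ := by
  classical
  rcases K.eq_empty_or_nonempty with rfl | hK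
  · simpa using hδ
  refine expect_le hK fun k hk => ?_
  have hle : ∀ k' ∈ K, c k k' ≤ (if k = k' then M else 0) + δ := by
    intro k' hk'
    split_ifs with h
    · subst h; linarith [hdiag k hk]
    · linarith [hoff hk hk' h]
  calc 𝔼 k' ∈ K, c k k' ≤ 𝔼 k' ∈ K, ((if k = k' then M else 0) + δ) := expect_le_expect hle
    _ = M / #K + δ := by
      rw [expect_add_distrib, expect_const hK, expect_eq_sum_div_card, sum_ite_eq, if_pos hk]

theorem expect_le_sqrt_expect_sq {α : Type*} (S : Finset α) (f : α → ℝ) :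
    𝔼 i ∈ S, f i ≤ √(𝔼 i ∈ S, f i ^ 2) := by
  rcases S.eq_empty_or_nonempty with rfl | hS
  · simp
  · refine Real.le_sqrt_of_sq_le ?_
    simpa only [Pi.one_apply, mul_one, one_pow, expect_const hS] using
      expect_mul_sq_le_sq_mul_sq S f 1

section Dynamics

variable {A G : Type*} [CStarAlgebra A]

theorem norm_starAlgEquiv_apply (φ : A ≃⋆ₐ[ℂ] A) (x : A) : ‖φ x‖ = ‖x‖ :=
  NonUnitalStarAlgHom.norm_map φ φ.injective x

/-- An action by *-automorphisms, viewed as a linear representation. -/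
noncomputable def actionRep [Group G] (τ : G →* (A ≃⋆ₐ[ℂ] A)) : Representation ℂ G A where
  toFun g := (τ g).toAlgEquiv.toLinearMap
  map_one' := by ext; simp
  map_mul' g h := by ext; simp

@[simp]
theorem actionRep_apply [Group G] (τ : G →* (A ≃⋆ₐ[ℂ] A)) (g : G) (x : A) :
    actionRep τ g x = τ g x := rfl

variable [PartialOrder A]

theorem map_mul_orbitAverage [Group G] (ω : A →ₚ[ℂ] ℂ) (τ : G →* (A ≃⋆ₐ[ℂ] A)) (S : Finset G)
    (x y : A) : ω (x * orbitAverage (actionRep τ) S y) = 𝔼 g ∈ S, ω (x * τ g y) :=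
  map_orbitAverage_eq_expect (actionRep τ) (ω.toLinearMap ∘ₗ LinearMap.mulLeft ℂ x) S y

theorem map_orbitAverage_mul [Group G] (ω : A →ₚ[ℂ] ℂ) (τ : G →* (A ≃⋆ₐ[ℂ] A)) (S : Finset G)
    (x y : A) : ω (orbitAverage (actionRep τ) S x * y) = 𝔼 g ∈ S, ω (τ g x * y) :=
  map_orbitAverage_eq_expect (actionRep τ) (ω.toLinearMap ∘ₗ LinearMap.mulRight ℂ y) S x

variable [StarOrderedRing A]

theorem twoNorm_orbitAverage_sq [Group G] (ω : A →ₚ[ℂ] ℂ)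
    (τ : G →* (A ≃⋆ₐ[ℂ] A)) (K : Finset G) (x : A) :
    twoNorm ω (orbitAverage (actionRep τ) K x) ^ 2 =
      𝔼 k ∈ K, 𝔼 k' ∈ K, (ω (star (τ k x) * τ k' x)).re := by
  have hstar : star (orbitAverage (actionRep τ) K x) = (#K : ℂ)⁻¹ • ∑ k ∈ K, star (τ k x) := by
    simp only [orbitAverage_apply, actionRep_apply, star_smul, star_sum, star_inv₀, star_natCast]
  have hexp : ω (star (orbitAverage (actionRep τ) K x) * orbitAverage (actionRep τ) K x) =
      (((#K : ℝ)⁻¹ * (#K : ℝ)⁻¹ : ℝ) : ℂ) * ∑ k ∈ K, ∑ k' ∈ K, ω (star (τ k x) * τ k' x) := by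
    rw [hstar, orbitAverage_apply, smul_mul_smul_comm, sum_mul_sum]
    simp only [actionRep_apply, map_smul, map_sum, smul_eq_mul]
    push_cast
    rfl
  simp only [twoNorm_sq, hexp, Complex.re_ofReal_mul, Complex.re_sum, expect_eq_sum_div_card,
    ← sum_div]
  ring

/-- `ω` is a tracial state invariant under the action `τ`. -/
structure TracialSystem [Group G] (ω : A →ₚ[ℂ] ℂ) (τ : G →* (A ≃⋆ₐ[ℂ] A)) : Prop where
  apply_one : ω 1 = 1
  apply_mul_comm (a b : A) : ω (a * b) = ω (b * a)
  apply_action (g : G) (a : A) : ω (τ g a) = ω a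

/-- The qualitative content of weak mixing: finitely many elements can be made simultaneously
almost uncorrelated with a translate of a given element of mean zero. -/
def HasDecorrelatingTimes [Group G] (ω : A →ₚ[ℂ] ℂ) (τ : G →* (A ≃⋆ₐ[ℂ] A)) : Prop :=
  ∀ (F : Finset A) (y : A), ω y = 0 → ∀ ε > 0, ∃ g, ∀ x ∈ F, ‖ω (x * τ g y)‖ ≤ ε

namespace TracialSystem

variable {ι : Type*} {ω : A →ₚ[ℂ] ℂ}

section Group

variable [Group G] {τ : G →* (A ≃⋆ₐ[ℂ] A)} (hsys : TracialSystem ω τ)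
include hsys

theorem twoNorm_action (g : G) (x : A) : twoNorm ω (τ g x) = twoNorm ω x := by
  rw [← sq_eq_sq₀ (apply_nonneg _ _) (apply_nonneg _ _), twoNorm_sq, twoNorm_sq, ← map_star,
    ← map_mul, hsys.apply_action]

theorem twoNorm_star (x : A) : twoNorm ω (star x) = twoNorm ω x := by
  rw [← sq_eq_sq₀ (apply_nonneg _ _) (apply_nonneg _ _), twoNorm_sq, twoNorm_sq, star_star,
    hsys.apply_mul_comm]

theorem norm_map_mul_le (x y : A) : ‖ω (x * y)‖ ≤ twoNorm ω x * ‖y‖ := by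
  calc ‖ω (x * y)‖ ≤ twoNorm ω (star x) * twoNorm ω y := by
        simpa only [star_star] using norm_map_star_mul_le ω (star x) y
    _ ≤ twoNorm ω x * ‖y‖ := by
        rw [hsys.twoNorm_star]
        gcongr
        exact twoNorm_le_norm hsys.apply_one y

theorem expect_expect_re_le (K : Finset G) (a b : A) :
    𝔼 k ∈ K, 𝔼 k' ∈ K, (ω (τ k' b * star (τ k b)) * ω (star (τ k a) * τ k' a)).re ≤
      ‖b‖ ^ 2 * 𝔼 k ∈ K, 𝔼 k' ∈ K, ‖ω (star (τ k a) * τ k' a)‖ := by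
  simp only [mul_expect]
  refine expect_le_expect fun k _ => expect_le_expect fun k' _ => (Complex.re_le_norm _).trans ?_
  rw [norm_mul, sq]
  gcongr
  calc ‖ω (τ k' b * star (τ k b))‖ ≤ ‖τ k' b‖ * ‖star (τ k b)‖ :=
        (hsys.norm_map_mul_le _ _).trans (by gcongr; exact twoNorm_le_norm hsys.apply_one _)
    _ = ‖b‖ * ‖b‖ := by rw [norm_star, norm_starAlgEquiv_apply, norm_starAlgEquiv_apply]

theorem exists_card_eq_pairwise (hD : HasDecorrelatingTimes ω τ) {y : A} (hy : ω y = 0) {δ : ℝ}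
    (hδ : 0 < δ) (hyδ : δ < twoNorm ω y ^ 2) (N : ℕ) :
    ∃ K : Finset G, #K = N ∧
      (K : Set G).Pairwise fun k k' => ‖ω (star (τ k y) * τ k' y)‖ ≤ δ := by
  classical
  have hnext (s : Finset G) : ∃ g, True ∧ ∀ k ∈ s, ‖ω (star (τ k y) * τ g y)‖ ≤ δ := by
    obtain ⟨g, hg⟩ := hD (s.image fun k => star (τ k y)) y hy δ hδ
    exact ⟨g, trivial, fun k hk => hg _ (mem_image_of_mem _ hk)⟩
  obtain ⟨k, -, hk⟩ := exists_seq_of_forall_finset_exists (fun _ : G => True)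
    (fun k g => ‖ω (star (τ k y) * τ g y)‖ ≤ δ) fun s _ => hnext s
  have hpair : Pairwise fun m n => ‖ω (star (τ (k m) y) * τ (k n) y)‖ ≤ δ := by
    intro m n hmn
    rcases hmn.lt_or_gt with h | h
    · exact hk m n h
    · rw [norm_map_star_mul_comm]
      exact hk n m h
  have hinj : Function.Injective k := by
    intro m n hmn
    by_contra hne
    have hsq : twoNorm ω y ^ 2 ≤ δ := by
      have hle : ‖ω (star (τ (k n) y) * τ (k n) y)‖ ≤ δ := by simpa only [hmn] using hpair hne
      rw [← hsys.twoNorm_action (k n), twoNorm_sq]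
      exact (Complex.re_le_norm _).trans hle
    exact hyδ.not_ge hsq
  refine ⟨(range N).map ⟨k, hinj⟩, by rw [card_map, card_range], ?_⟩
  rw [coe_map]
  rintro _ ⟨m, -, rfl⟩ _ ⟨n, -, rfl⟩ hne
  exact hpair fun h => hne (congrArg k h)

theorem exists_expect_expect_norm_le (hD : HasDecorrelatingTimes ω τ) {y : A} (hy : ω y = 0)
    {ε : ℝ} (hε : 0 < ε) :
    ∃ K : Finset G, K.Nonempty ∧ 𝔼 k ∈ K, 𝔼 k' ∈ K, ‖ω (star (τ k y) * τ k' y)‖ ≤ ε := by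
  have hdiag (k : G) : ‖ω (star (τ k y) * τ k y)‖ ≤ twoNorm ω y ^ 2 :=
    (norm_map_star_mul_le ω _ _).trans_eq (by rw [hsys.twoNorm_action, sq])
  rcases le_or_gt (twoNorm ω y ^ 2) (ε / 2) with hsmall | hlarge
  · refine ⟨{1}, singleton_nonempty 1, ?_⟩
    simp only [expect_singleton]
    linarith [hdiag 1]
  · obtain ⟨N, hN⟩ := exists_nat_gt (twoNorm ω y ^ 2 / (ε / 2))
    have hN0 : (0 : ℝ) < N := lt_of_le_of_lt (by positivity) hN
    obtain ⟨K, hKN, hK⟩ := hsys.exists_card_eq_pairwise hD hy (half_pos hε) hlarge N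
    refine ⟨K, card_pos.mp (hKN ▸ Nat.cast_pos.mp hN0), ?_⟩
    have := expect_expect_le_of_pairwise (half_pos hε).le (fun k _ => hdiag k) hK
    rw [div_lt_comm₀ (half_pos hε) hN0, ← hKN] at hN
    linarith

theorem exists_twoNorm_orbitAverage_le (hD : HasDecorrelatingTimes ω τ) {y : A} (hy : ω y = 0)
    {ε : ℝ} (hε : 0 < ε) :
    ∃ K : Finset G, K.Nonempty ∧ twoNorm ω (orbitAverage (actionRep τ) K y) ≤ ε := by
  obtain ⟨K, hK, hKε⟩ := hsys.exists_expect_expect_norm_le hD hy (pow_pos hε 2)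
  refine ⟨K, hK, (pow_le_pow_iff_left₀ (apply_nonneg _ _) hε.le two_ne_zero).mp ?_⟩
  rw [twoNorm_orbitAverage_sq]
  exact le_trans (expect_le_expect fun k _ => expect_le_expect fun k' _ => Complex.re_le_norm _) hKε

end Group

section CommGroup

variable [CommGroup G] [DecidableEq G] {τ : G →* (A ≃⋆ₐ[ℂ] A)} {l : Filter ι} {S : ι → Finset G}

theorem tendsto_orbitAverage (hsys : TracialSystem ω τ) (hD : HasDecorrelatingTimes ω τ)
    (hS : IsFolnerFinset l S) (y : A) :
    Tendsto (fun i => twoNorm ω (orbitAverage (actionRep τ) (S i) y - ω y • 1)) l (𝓝 0) := by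
  have hmean : ω (y - ω y • 1) = 0 := by
    simp only [map_sub, map_smul, hsys.apply_one, smul_eq_mul, mul_one, sub_self]
  refine (hS.tendsto_orbitAverage_zero (actionRep τ) (twoNorm ω) hsys.twoNorm_action
    fun ε hε => hsys.exists_twoNorm_orbitAverage_le hD hmean hε).congr' ?_
  filter_upwards [hS.eventually_nonempty] with i hi
  rw [map_sub, orbitAverage_of_fixed _ hi (x := ω y • (1 : A)) fun g => by simp]

theorem tendsto_map_mul_orbitAverage (hsys : TracialSystem ω τ) (hD : HasDecorrelatingTimes ω τ)
    (hS : IsFolnerFinset l S) (x y : A) :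
    Tendsto (fun i => ω (x * orbitAverage (actionRep τ) (S i) y)) l (𝓝 (ω x * ω y)) := by
  rw [tendsto_iff_norm_sub_tendsto_zero]
  refine squeeze_zero (fun _ => norm_nonneg _) (fun i => ?_)
    ((mul_zero ‖star x‖) ▸ (hsys.tendsto_orbitAverage hD hS y).const_mul ‖star x‖)
  calc ‖ω (x * orbitAverage (actionRep τ) (S i) y) - ω x * ω y‖
      = ‖ω (star (star x) * (orbitAverage (actionRep τ) (S i) y - ω y • 1))‖ := by
        rw [star_star, mul_sub, map_sub, mul_smul_comm, map_smul, mul_one, smul_eq_mul,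
          mul_comm (ω x)]
    _ ≤ ‖star x‖ * twoNorm ω (orbitAverage (actionRep τ) (S i) y - ω y • 1) :=
        (norm_map_star_mul_le ω _ _).trans (by gcongr; exact twoNorm_le_norm hsys.apply_one _)

variable {S₁ S₂ : ι → Finset G}

theorem tendsto_expect_twoNorm_orbitAverage_sq (hsys : TracialSystem ω τ)
    (hD : HasDecorrelatingTimes ω τ) (hS : IsFolnerFinset l S) (K : Finset G) (a b : A) :
    Tendsto (fun i => 𝔼 h ∈ S i, twoNorm ω (orbitAverage (actionRep τ) K (τ h a * b)) ^ 2) l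
      (𝓝 (𝔼 k ∈ K, 𝔼 k' ∈ K,
        (ω (τ k' b * star (τ k b)) * ω (star (τ k a) * τ k' a)).re)) := by
  have hsplit (h k k' : G) : ω (star (τ k (τ h a * b)) * τ k' (τ h a * b)) =
      ω (τ k' b * star (τ k b) * τ h (star (τ k a) * τ k' a)) := by
    have hcomm (j : G) : τ h (τ j a) = τ j (τ h a) := by
      rw [← StarAlgEquiv.mul_apply, ← StarAlgEquiv.mul_apply, ← map_mul, ← map_mul, mul_comm h]
    rw [map_mul (τ k), map_mul (τ k'), map_mul (τ h), map_star (τ h), hcomm, hcomm, star_mul,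
      mul_assoc (τ k' b), hsys.apply_mul_comm (τ k' b)]
    simp only [mul_assoc]
  have havg (i : ι) : 𝔼 h ∈ S i, twoNorm ω (orbitAverage (actionRep τ) K (τ h a * b)) ^ 2 =
      𝔼 k ∈ K, 𝔼 k' ∈ K, (ω (τ k' b * star (τ k b) *
        orbitAverage (actionRep τ) (S i) (star (τ k a) * τ k' a))).re := by
    simp only [twoNorm_orbitAverage_sq, hsplit, map_mul_orbitAverage, Complex.re_expect]
    rw [expect_comm]
    exact expect_congr rfl fun k _ => expect_comm _ _ _
  simp only [havg, expect_eq_sum_div_card]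
  exact (tendsto_finsetSum K fun k _ => (tendsto_finsetSum K fun k' _ =>
    (Complex.continuous_re.tendsto _).comp
      (hsys.tendsto_map_mul_orbitAverage hD hS _ _)).div_const _).div_const _

theorem tendsto_expect_twoNorm_orbitAverage (hsys : TracialSystem ω τ)
    (hD : HasDecorrelatingTimes ω τ) (hS₁ : IsFolnerFinset l S₁) (hS₂ : IsFolnerFinset l S₂)
    {a : A} (ha : ω a = 0) (b : A) :
    Tendsto (fun i => 𝔼 h ∈ S₁ i, twoNorm ω (orbitAverage (actionRep τ) (S₂ i) (τ h a * b))) l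
      (𝓝 0) := by
  refine tendsto_zero_of_forall_le
    (fun i => expect_nonneg fun _ _ => apply_nonneg (twoNorm ω) _) fun ε hε => ?_
  obtain ⟨K, hK, hKε⟩ := hsys.exists_expect_expect_norm_le hD ha
    (show 0 < ε ^ 2 / (‖b‖ ^ 2 + 1) by positivity)
  set D : ι → ℝ := fun i => 𝔼 k ∈ K, (#((k • S₂ i) ∆ S₂ i) / #(S₂ i) : ℝ)
  have hnorm (h : G) : twoNorm ω (τ h a * b) ≤ ‖a‖ * ‖b‖ :=
    (twoNorm_le_norm hsys.apply_one _).trans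
      ((norm_mul_le _ _).trans_eq (by rw [norm_starAlgEquiv_apply]))
  have hlim := (((hS₂.tendsto_expect_card_smul_symmDiff K).mul_const (‖a‖ * ‖b‖)).add
    (hsys.tendsto_expect_twoNorm_orbitAverage_sq hD hS₁ K a b).sqrt)
  refine ⟨_, ?_, _, ?_, hlim⟩
  · filter_upwards [hS₁.eventually_nonempty] with i hi
    calc 𝔼 h ∈ S₁ i, twoNorm ω (orbitAverage (actionRep τ) (S₂ i) (τ h a * b))
        ≤ 𝔼 h ∈ S₁ i, (D i * (‖a‖ * ‖b‖) +
            twoNorm ω (orbitAverage (actionRep τ) K (τ h a * b))) := by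
          refine expect_le_expect fun h _ => (seminorm_orbitAverage_le_add (actionRep τ) (twoNorm ω)
            hsys.twoNorm_action (S₂ i) hK _).trans ?_
          gcongr
          exact hnorm h
      _ ≤ _ := by
          rw [expect_add_distrib, expect_const hi]
          gcongr
          exact expect_le_sqrt_expect_sq _ _
  · rw [zero_mul, zero_add, Real.sqrt_le_left hε.le]
    calc _ ≤ ‖b‖ ^ 2 * (ε ^ 2 / (‖b‖ ^ 2 + 1)) := (hsys.expect_expect_re_le K a b).trans (by gcongr)
      _ ≤ ε ^ 2 := by
        rw [mul_div_left_comm]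
        exact mul_le_of_le_one_right (sq_nonneg ε)
          ((div_le_one (by positivity)).mpr (lt_add_one _).le)

theorem tendsto_expect_expect_map_of_map_eq_zero (hsys : TracialSystem ω τ)
    (hD : HasDecorrelatingTimes ω τ) (hS₁ : IsFolnerFinset l S₁) (hS₂ : IsFolnerFinset l S₂)
    {a : A} (ha : ω a = 0) (b c d : A) :
    Tendsto (fun i => 𝔼 h ∈ S₁ i, 𝔼 g ∈ S₂ i, ω (τ (g * h) a * τ g b * τ h c * d)) l (𝓝 0) := by
  have hfactor (h g : G) : τ (g * h) a * τ g b * τ h c * d = τ g (τ h a * b) * (τ h c * d) := by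
    rw [map_mul, StarAlgEquiv.mul_apply, map_mul, mul_assoc (_ * _)]
  have hbound (i : ι) : ‖𝔼 h ∈ S₁ i, 𝔼 g ∈ S₂ i, ω (τ (g * h) a * τ g b * τ h c * d)‖ ≤
      (𝔼 h ∈ S₁ i, twoNorm ω (orbitAverage (actionRep τ) (S₂ i) (τ h a * b))) * (‖c‖ * ‖d‖) := by
    rw [expect_mul]
    refine (RCLike.norm_expect_le (K := ℂ)).trans (expect_le_expect fun h _ => ?_)
    simp only [hfactor, ← map_orbitAverage_mul]
    refine (hsys.norm_map_mul_le _ _).trans ?_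
    gcongr
    exact (norm_mul_le _ _).trans_eq (by rw [norm_starAlgEquiv_apply])
  exact squeeze_zero_norm hbound (by
    simpa only [zero_mul] using
      (hsys.tendsto_expect_twoNorm_orbitAverage hD hS₁ hS₂ ha b).mul_const (‖c‖ * ‖d‖))

theorem tendsto_map_orbitAverage_mul_orbitAverage (hsys : TracialSystem ω τ)
    (hD : HasDecorrelatingTimes ω τ) (hS₁ : IsFolnerFinset l S₁) (hS₂ : IsFolnerFinset l S₂)
    (b c d : A) :
    Tendsto (fun i => ω (orbitAverage (actionRep τ) (S₂ i) b *
      (orbitAverage (actionRep τ) (S₁ i) c * d))) l (𝓝 (ω b * (ω c * ω d))) := by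
  set v : ι → A := fun i => orbitAverage (actionRep τ) (S₁ i) c * d
  set u : ι → A := fun i => orbitAverage (actionRep τ) (S₂ i) b - ω b • 1
  have hsplit (i : ι) : ω (u i * v i) + ω b * ω (v i) =
      ω (orbitAverage (actionRep τ) (S₂ i) b * v i) := by
    simp only [u, sub_mul, map_sub, smul_mul_assoc, one_mul, map_smul, smul_eq_mul, sub_add_cancel]
  have hv (i : ι) : ‖v i‖ ≤ ‖c‖ * ‖d‖ := by
    refine (norm_mul_le _ _).trans ?_
    gcongr
    exact seminorm_orbitAverage_le (actionRep τ) (normSeminorm ℂ A)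
      (fun g => norm_starAlgEquiv_apply (τ g)) (S₁ i) c
  have herror : Tendsto (fun i => ω (u i * v i)) l (𝓝 0) := by
    refine squeeze_zero_norm (fun i => (hsys.norm_map_mul_le (u i) (v i)).trans
      (mul_le_mul_of_nonneg_left (hv i) (apply_nonneg _ _))) ?_
    simpa only [zero_mul] using (hsys.tendsto_orbitAverage hD hS₂ b).mul_const (‖c‖ * ‖d‖)
  have hmain : Tendsto (fun i => ω (v i)) l (𝓝 (ω c * ω d)) := by
    simpa only [v, hsys.apply_mul_comm _ d, mul_comm (ω d)] using
      hsys.tendsto_map_mul_orbitAverage hD hS₁ d c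
  simpa only [hsplit, zero_add] using herror.add (hmain.const_mul (ω b))

theorem tendsto_expect_expect_map (hsys : TracialSystem ω τ)
    (hD : HasDecorrelatingTimes ω τ) (hS₁ : IsFolnerFinset l S₁) (hS₂ : IsFolnerFinset l S₂)
    (a b c d : A) :
    Tendsto (fun i => 𝔼 h ∈ S₁ i, 𝔼 g ∈ S₂ i, ω (τ (g * h) a * τ g b * τ h c * d)) l
      (𝓝 (ω a * ω b * ω c * ω d)) := by
  set a₀ := a - ω a • (1 : A) with ha₀
  have hmean : ω a₀ = 0 := by
    simp only [ha₀, map_sub, map_smul, hsys.apply_one, smul_eq_mul, mul_one, sub_self]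
  have hpair (i : ι) : 𝔼 h ∈ S₁ i, 𝔼 g ∈ S₂ i, ω (τ g b * (τ h c * d)) =
      ω (orbitAverage (actionRep τ) (S₂ i) b * (orbitAverage (actionRep τ) (S₁ i) c * d)) := by
    simp only [← map_orbitAverage_mul]
    exact (map_orbitAverage_eq_expect (actionRep τ) (ω.toLinearMap ∘ₗ
      LinearMap.mulLeft ℂ (orbitAverage (actionRep τ) (S₂ i) b) ∘ₗ LinearMap.mulRight ℂ d)
      (S₁ i) c).symm
  have hsplit (h g : G) : ω (τ (g * h) a * τ g b * τ h c * d) =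
      ω (τ (g * h) a₀ * τ g b * τ h c * d) + ω a * ω (τ g b * (τ h c * d)) := by
    simp only [ha₀, map_sub, map_smul, map_one, sub_mul, smul_mul_assoc, one_mul, smul_eq_mul,
      mul_assoc, sub_add_cancel]
  simp only [hsplit, expect_add_distrib, ← mul_expect, hpair]
  simpa only [zero_add, mul_assoc] using
    (hsys.tendsto_expect_expect_map_of_map_eq_zero hD hS₁ hS₂ hmean b c d).add
      ((hsys.tendsto_map_orbitAverage_mul_orbitAverage hD hS₁ hS₂ b c d).const_mul (ω a))

end CommGroup

end TracialSystem

end Dynamics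

section CountingMeasure

variable {α : Type*} [MeasurableSpace α] {S : Finset α}

theorem count_restrict_finset (hS : MeasurableSet (S : Set α)) :
    Measure.count.restrict (S : Set α) = ∑ x ∈ S, Measure.dirac x := by
  ext s hs
  classical
  have hinter : s ∩ S = (↑(S.filter (· ∈ s)) : Set α) := by ext; simp [and_comm]
  have hmeas : MeasurableSet (↑(S.filter (· ∈ s)) : Set α) := hinter ▸ hs.inter hS
  rw [Measure.restrict_apply hs, hinter, Measure.count_apply_finset' hmeas]
  simp [Measure.dirac_apply' _ hs, Set.indicator_apply]

theorem setIntegral_count_finset {E : Type*} [NormedAddCommGroup E] [NormedSpace ℝ E]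
    [CompleteSpace E] (hS : MeasurableSet (S : Set α)) {f : α → E} (hf : StronglyMeasurable f) :
    ∫ x in S, f x ∂Measure.count = ∑ x ∈ S, f x := by
  rw [count_restrict_finset hS, integral_finsetSum_measure fun x _ =>
    integrable_dirac' hf enorm_lt_top]
  simp only [integral_dirac' _ _ hf]

theorem toReal_count_finset (hS : MeasurableSet (S : Set α)) :
    (Measure.count (S : Set α)).toReal = #S := by
  rw [Measure.count_apply_finset' hS, ENNReal.toReal_natCast]

theorem inv_count_smul_setIntegral_eq_expect {𝕜 : Type*} [RCLike 𝕜]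
    (hS : MeasurableSet (S : Set α)) {f : α → 𝕜} (hf : StronglyMeasurable f) :
    (Measure.count (S : Set α)).toReal⁻¹ • ∫ x in S, f x ∂Measure.count = 𝔼 x ∈ S, f x := by
  rw [setIntegral_count_finset hS hf, toReal_count_finset hS, expect_eq_sum_div_card,
    RCLike.real_smul_eq_coe_mul, RCLike.ofReal_inv, RCLike.ofReal_natCast, div_eq_inv_mul]

theorem inv_count_smul_setIntegral_setIntegral_eq_expect {β 𝕜 : Type*}
    [MeasurableSpace β] [RCLike 𝕜] {T : Finset β} (hS : MeasurableSet (S : Set α))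
    (hT : MeasurableSet (T : Set β)) {f : α → β → 𝕜} (hf : ∀ y, StronglyMeasurable (f · y))
    (hf' : ∀ x, StronglyMeasurable (f x)) :
    ((Measure.count (S : Set α)).toReal * (Measure.count (T : Set β)).toReal)⁻¹ •
      ∫ x in S, ∫ y in T, f x y ∂Measure.count ∂Measure.count = 𝔼 x ∈ S, 𝔼 y ∈ T, f x y := by
  have hinner (x : α) : (Measure.count (T : Set β)).toReal⁻¹ • ∫ y in T, f x y ∂Measure.count =
      𝔼 y ∈ T, f x y := inv_count_smul_setIntegral_eq_expect hT (hf' x)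
  have houter : StronglyMeasurable fun x => 𝔼 y ∈ T, f x y := by
    simp only [expect_eq_sum_div_card, div_eq_mul_inv]
    exact (Finset.stronglyMeasurable_fun_sum T fun y _ => hf y).mul_const _
  rw [mul_inv, mul_smul, ← integral_smul]
  simp only [hinner]
  exact inv_count_smul_setIntegral_eq_expect hS houter

theorem exists_finset_eventually_coe_eq {ι : Type*} {l : Filter ι} {F : ι → Set α}
    (hmeas : ∀ᶠ i in l, MeasurableSet (F i)) (htop : ∀ᶠ i in l, Measure.count (F i) ≠ ⊤) :
    ∃ S : ι → Finset α, ∀ᶠ i in l, ↑(S i) = F i := by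
  have hfin : ∀ᶠ i in l, ∃ s : Finset α, ↑s = F i := by
    filter_upwards [hmeas, htop] with i hi hi'
    exact ((Measure.count_apply_lt_top' hi).mp hi'.lt_top).exists_finset_coe
  exact skolem.mp hfin

end CountingMeasure

section Folner

variable {G ι : Type*} {l : Filter ι}

theorem exists_isFolnerFinset [Group G] [DecidableEq G] [MeasurableSpace G] [MeasurableMul G]
    {F : ι → Set G} (hF : IsFoelner G Measure.count l F) :
    ∃ S : ι → Finset G, IsFolnerFinset l S ∧ ∀ᶠ i in l, ↑(S i) = F i := by
  obtain ⟨S, hSF⟩ := exists_finset_eventually_coe_eq hF.eventually_measurableSet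
    hF.eventually_meas_ne_top
  refine ⟨S, ⟨?_, fun g => ?_⟩, hSF⟩
  · filter_upwards [hSF, hF.eventually_meas_ne_zero] with i hi hne
    rw [← coe_nonempty, hi]
    exact nonempty_of_measure_ne_zero hne
  · refine ((ENNReal.tendsto_toReal ENNReal.zero_ne_top).comp
      (hF.tendsto_meas_smul_symmDiff g)).congr' ?_
    filter_upwards [hSF, hF.eventually_measurableSet] with i hi hmeas
    rw [← hi] at hmeas
    have hmeas' : MeasurableSet (↑((g • S i) ∆ S i) : Set G) := by
      rw [coe_symmDiff, coe_smul_finset]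
      exact (hmeas.const_smul g).symmDiff hmeas
    rw [Function.comp_apply, ← hi, ← coe_smul_finset, ← coe_symmDiff, ENNReal.toReal_div,
      toReal_count_finset hmeas, toReal_count_finset hmeas']

theorem IsFolnerFinset.translate [CommGroup G] [DecidableEq G] {κ : Type*} {l' : Filter κ}
    {S : ι → Finset G} (hS : IsFolnerFinset l S) {f : κ → ι} (hf : Tendsto f l' l) (c : κ → G) :
    IsFolnerFinset l' fun j => c j • S (f j) where
  eventually_nonempty := (hf.eventually hS.eventually_nonempty).mono fun _ h => h.smul_finset
  tendsto_card_smul_symmDiff g := by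
    simpa only [Function.comp_def, smul_comm g, ← smul_finset_symmDiff, card_smul_finset] using
      (hS.tendsto_card_smul_symmDiff g).comp hf

theorem mul_singleton_eq_smul_set [CommGroup G] (s : Set G) (g : G) : s * {g} = g • s := by
  rw [mul_comm, ← smul_eq_mul, Set.singleton_smul]

theorem isFoelner_count_of_tendsto_toReal [CommGroup G] [MeasurableSpace G] [MeasurableMul G]
    {F : ι → Set G} (hmeas : ∀ i, MeasurableSet (F i))
    (hfin : ∀ᶠ i in l, 0 < Measure.count (F i) ∧ Measure.count (F i) < ⊤)
    (htendsto : ∀ g : G, Tendsto (fun i =>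
      (Measure.count (F i ∆ (F i * {g}))).toReal / (Measure.count (F i)).toReal) l (𝓝 0)) :
    IsFoelner G Measure.count l F where
  eventually_measurableSet := .of_forall hmeas
  eventually_meas_ne_zero := hfin.mono fun _ h => h.1.ne'
  eventually_meas_ne_top := hfin.mono fun _ h => h.2.ne
  tendsto_meas_smul_symmDiff g := by
    rw [← ENNReal.ofReal_zero]
    refine (ENNReal.tendsto_ofReal (htendsto g)).congr' ?_
    filter_upwards [hfin] with i hi
    have hF : (F i).Finite := (Measure.count_apply_lt_top' (hmeas i)).mp hi.2
    have hsymmDiff : Measure.count ((g • F i) ∆ F i) < ⊤ :=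
      (Measure.count_apply_lt_top' (((hmeas i).const_smul g).symmDiff (hmeas i))).mpr
        (hF.smul_set.symmDiff hF)
    rw [mul_singleton_eq_smul_set, symmDiff_comm, ← ENNReal.toReal_div,
      ENNReal.ofReal_toReal (ENNReal.div_lt_top hsymmDiff.ne hi.1.ne').ne]

end Folner

section Integrals

variable {A G : Type*} [CStarAlgebra A] [PartialOrder A] {ω : A →ₚ[ℂ] ℂ}

theorem HasDecorrelatingTimes.of_tendsto_expect [Group G] {τ : G →* (A ≃⋆ₐ[ℂ] A)} {ι : Type*}
    {l : Filter ι} [l.NeBot] {S : ι → Finset G} (hS : ∀ᶠ i in l, (S i).Nonempty)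
    (hmix : ∀ x y, Tendsto (fun i => 𝔼 g ∈ S i, ‖ω (x * τ g y) - ω x * ω y‖) l (𝓝 0)) :
    HasDecorrelatingTimes ω τ := by
  intro F y hy ε hε
  have hsum : Tendsto (fun i => 𝔼 g ∈ S i, ∑ x ∈ F, ‖ω (x * τ g y)‖) l (𝓝 0) := by
    simpa only [hy, mul_zero, sub_zero, expect_sum_comm, sum_const_zero] using
      tendsto_finsetSum F fun x _ => hmix x y
  obtain ⟨i, hi, hlt⟩ := (hS.and (hsum.eventually (gt_mem_nhds hε))).exists
  obtain ⟨g, -, hg⟩ := exists_le_of_expect_le hi hlt.le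
  exact ⟨g, fun x hx =>
    (single_le_sum (f := fun x => ‖ω (x * τ g y)‖) (fun _ _ => norm_nonneg _) hx).trans hg⟩

variable [MeasurableSpace G]

theorem HasDecorrelatingTimes.of_tendsto_setIntegral [Group G] {τ : G →* (A ≃⋆ₐ[ℂ] A)}
    (hτ : ∀ a b, Measurable fun g => ω (a * τ g b)) {ι : Type*} {l : Filter ι} [l.NeBot]
    {F : ι → Set G} (hmeas : ∀ᶠ i in l, MeasurableSet (F i))
    (hfin : ∀ᶠ i in l, 0 < Measure.count (F i) ∧ Measure.count (F i) < ⊤)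
    (hmix : ∀ a b, Tendsto (fun i => (Measure.count (F i)).toReal⁻¹ *
      ∫ g in F i, ‖ω (a * τ g b) - ω a * ω b‖ ∂Measure.count) l (𝓝 0)) :
    HasDecorrelatingTimes ω τ := by
  obtain ⟨S, hSF⟩ := exists_finset_eventually_coe_eq hmeas (hfin.mono fun _ h => h.2.ne)
  refine .of_tendsto_expect (S := S) ?_ fun a b => (hmix a b).congr' ?_
  · filter_upwards [hSF, hfin] with i hi hpos
    rw [← coe_nonempty, hi]
    exact nonempty_of_measure_ne_zero hpos.1.ne'
  · filter_upwards [hSF, hmeas] with i hi himeas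
    rw [← hi] at himeas ⊢
    exact inv_count_smul_setIntegral_eq_expect himeas
      ((hτ a b).sub_const _).norm.stronglyMeasurable

namespace TracialSystem

theorem measurable_map_action_mul_mul_action_mul [Group G] [Countable G] {τ : G →* (A ≃⋆ₐ[ℂ] A)}
    (hsys : TracialSystem ω τ) (hτ : ∀ a b, Measurable fun g => ω (a * τ g b)) (a b c d : A) :
    Measurable fun h => ω (τ h a * b * τ h c * d) := by
  have hleft (k : G) : Measurable fun h => ω (τ h a * b * τ k c * d) := by
    simpa only [hsys.apply_mul_comm _ (τ _ a), ← mul_assoc] using hτ (b * τ k c * d) a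
  have hright (h : G) : Measurable fun k => ω (τ h a * b * τ k c * d) := by
    simpa only [hsys.apply_mul_comm d, mul_assoc] using hτ (d * τ h a * b) c
  have hjoint : Measurable fun p : G × G => ω (τ p.1 a * b * τ p.2 c * d) :=
    measurable_from_prod_countable_left' hleft fun k k' h hk' =>
      mem_of_mem_measurableAtom hk' (hright h (measurableSet_singleton _)) rfl
  exact hjoint.comp (measurable_id.prodMk measurable_id)

variable [CommGroup G] [Countable G] [MeasurableMul G] {τ : G →* (A ≃⋆ₐ[ℂ] A)}

theorem inv_count_smul_setIntegral_translate_eq_expect [DecidableEq G]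
    (hsys : TracialSystem ω τ) (hτ : ∀ a b, Measurable fun g => ω (a * τ g b)) {S₁ S₂ : Finset G}
    (hS₁ : MeasurableSet (S₁ : Set G)) (hS₂ : MeasurableSet (S₂ : Set G)) (g₁ g₂ : G)
    (a b c d : A) :
    ((Measure.count (S₁ : Set G)).toReal * (Measure.count (S₂ : Set G)).toReal)⁻¹ •
        ∫ h in (S₁ * {g₁} : Set G), ∫ g in (S₂ * {g₂} : Set G),
          ω (τ (g * h) a * τ g b * τ h c * d) ∂Measure.count ∂Measure.count =
      𝔼 h ∈ g₁ • S₁, 𝔼 g ∈ g₂ • S₂, ω (τ (g * h) a * τ g b * τ h c * d) := by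
  have hmeas {S : Finset G} (hS : MeasurableSet (S : Set G)) (g : G) :
      MeasurableSet (↑(g • S) : Set G) := by
    rw [coe_smul_finset]
    exact hS.const_smul g
  have hcount {S : Finset G} (hS : MeasurableSet (S : Set G)) (g : G) :
      (Measure.count (S : Set G)).toReal = (Measure.count (↑(g • S) : Set G)).toReal := by
    rw [toReal_count_finset hS, toReal_count_finset (hmeas hS g), card_smul_finset]
  have hfst (g : G) : StronglyMeasurable fun h => ω (τ (g * h) a * τ g b * τ h c * d) := by
    simpa only [mul_comm g, map_mul, StarAlgEquiv.mul_apply] using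
      (hsys.measurable_map_action_mul_mul_action_mul hτ (τ g a) (τ g b) c d).stronglyMeasurable
  have hcyclic (h g : G) : ω (τ (g * h) a * τ g b * τ h c * d) =
      ω (τ h c * d * τ g (τ h a * b)) := by
    rw [hsys.apply_mul_comm (τ h c * d), map_mul τ, map_mul (τ g), StarAlgEquiv.mul_apply,
      mul_assoc _ (τ h c)]
  have hsnd (h : G) : StronglyMeasurable fun g => ω (τ (g * h) a * τ g b * τ h c * d) := by
    simpa only [hcyclic] using (hτ (τ h c * d) (τ h a * b)).stronglyMeasurable
  rw [hcount hS₁ g₁, hcount hS₂ g₂, mul_singleton_eq_smul_set, mul_singleton_eq_smul_set,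
    ← coe_smul_finset, ← coe_smul_finset]
  exact inv_count_smul_setIntegral_setIntegral_eq_expect (hmeas hS₁ g₁) (hmeas hS₂ g₂)
    hfst hsnd

theorem tendstoUniformly_setIntegral_setIntegral [StarOrderedRing A] (hsys : TracialSystem ω τ)
    (hD : HasDecorrelatingTimes ω τ) (hτ : ∀ a b, Measurable fun g => ω (a * τ g b))
    {ι : Type*} {l : Filter ι} {F₁ F₂ : ι → Set G} (hF₁ : IsFoelner G Measure.count l F₁)
    (hF₂ : IsFoelner G Measure.count l F₂) (a b c d : A) :
    TendstoUniformly (fun i (q : G × G) =>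
      ((Measure.count (F₁ i)).toReal * (Measure.count (F₂ i)).toReal)⁻¹ •
        ∫ h in F₁ i * {q.1}, ∫ g in F₂ i * {q.2},
          ω (τ (g * h) a * τ g b * τ h c * d) ∂Measure.count ∂Measure.count)
      (fun _ => ω a * ω b * ω c * ω d) l := by
  classical
  obtain ⟨S₁, hS₁, hSF₁⟩ := exists_isFolnerFinset hF₁
  obtain ⟨S₂, hS₂, hSF₂⟩ := exists_isFolnerFinset hF₂
  rw [← tendsto_prod_top_iff]
  refine (hsys.tendsto_expect_expect_map hD (hS₁.translate tendsto_fst fun p => p.2.1)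
    (hS₂.translate tendsto_fst fun p => p.2.2) a b c d).congr' ?_
  filter_upwards [tendsto_fst.eventually hSF₁, tendsto_fst.eventually hSF₂,
    tendsto_fst.eventually hF₁.eventually_measurableSet,
    tendsto_fst.eventually hF₂.eventually_measurableSet] with ⟨i, g₁, g₂⟩ h₁ h₂ hmeas₁ hmeas₂
  rw [← h₁] at hmeas₁
  rw [← h₂] at hmeas₂
  simp only [Function.HasUncurry.uncurry, ← h₁, ← h₂]
  exact (hsys.inv_count_smul_setIntegral_translate_eq_expect hτ hmeas₁ hmeas₂
    g₁ g₂ a b c d).symm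

end TracialSystem

end Integrals

theorem bergelson_weakly_mixing_uniform_general {A : Type*} [CStarAlgebra A] (ω : A →ₗ[ℂ] ℂ)
    (hω_pos : ∀ a : A, 0 ≤ ω (star a * a)) (hω_one : ω 1 = 1)
    (hω_tracial : ∀ a b : A, ω (a * b) = ω (b * a))
    {G : Type*} [CommGroup G] [Countable G] [MeasurableSpace G] [MeasurableMul G]
    (τ : G → A ≃⋆ₐ[ℂ] A) (hτ_mul : ∀ g h a, τ g (τ h a) = τ (g * h) a)
    (hω_inv : ∀ g a, ω (τ g a) = ω a)
    (hτ_meas : ∀ a b : A, Measurable fun g : G => ω (a * τ g b))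
    {κ : Type*} {m : Filter κ} [m.NeBot] {Λ : κ → Set G}
    (hΛmeas : ∀ᶠ n in m, MeasurableSet (Λ n))
    (hΛfin : ∀ᶠ n in m, 0 < Measure.count (Λ n) ∧ Measure.count (Λ n) < ⊤)
    (hmix : ∀ a b : A, Tendsto (fun n => (Measure.count (Λ n)).toReal⁻¹ *
      ∫ g in Λ n, ‖ω (a * τ g b) - ω a * ω b‖ ∂Measure.count) m (𝓝 0))
    {ι : Type*} {l : Filter ι} {Λ1 Λ2 : ι → Set G} (hΛ1 : IsFoelner G Measure.count l Λ1)
    (hΛ2 : IsFoelner G Measure.count l Λ2) (a b c d : A) {ε : ℝ} (hε : 0 < ε) :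
    ∀ᶠ n in l, ∀ g₁ g₂ : G,
      ‖((Measure.count (Λ1 n)).toReal * (Measure.count (Λ2 n)).toReal)⁻¹ •
          (∫ h in Λ1 n * {g₁}, ∫ g in Λ2 n * {g₂},
            ω (τ (g * h) a * τ g b * τ h c * d) ∂Measure.count ∂Measure.count)
        - ω a * ω b * ω c * ω d‖ ≤ ε := by
  let := CStarAlgebra.spectralOrder A
  let := CStarAlgebra.spectralOrderedRing A
  let φ : A →ₚ[ℂ] ℂ := .mk₀ ω fun a ha => by
    obtain ⟨x, rfl⟩ := CStarAlgebra.nonneg_iff_eq_star_mul_self.mp ha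
    exact hω_pos x
  let σ : G →* (A ≃⋆ₐ[ℂ] A) := .mk' τ fun g h => StarAlgEquiv.ext fun a => (hτ_mul g h a).symm
  have hsystem : TracialSystem φ σ := ⟨hω_one, hω_tracial, hω_inv⟩
  have hD : HasDecorrelatingTimes φ σ := .of_tendsto_setIntegral hτ_meas hΛmeas hΛfin hmix
  filter_upwards [Metric.tendstoUniformly_iff.mp
    (hsystem.tendstoUniformly_setIntegral_setIntegral hD hτ_meas hΛ1 hΛ2 a b c d) ε hε]
    with n hn g₁ g₂
  rw [← dist_eq_norm, dist_comm]
  exact (hn (g₁, g₂)).le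

/-- **Theorem 5.6(2): the uniform Bergelson theorem for weakly mixing C*-dynamical
systems** (counting measure case). -/
theorem bergelson_weakly_mixing_uniform
    -- a unital C*-algebra A
    {A : Type*} [NormedRing A] [StarRing A] [CStarRing A] [NormedAlgebra ℂ A]
    [CompleteSpace A] [StarModule ℂ A]
    -- a tracial state ω on A
    (ω : A →ₗ[ℂ] ℂ) (hω_pos : ∀ a : A, 0 ≤ ω (star a * a)) (hω_one : ω 1 = 1)
    (hω_tracial : ∀ a b : A, ω (a * b) = ω (b * a))
    -- a countable second countable topological abelian group G with the counting measure
    -- on its Borel σ-algebra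
    {G : Type*} [CommGroup G] [Countable G] [TopologicalSpace G] [IsTopologicalGroup G]
    [SecondCountableTopology G] [MeasurableSpace G] [BorelSpace G]
    -- the action τ, making (A, ω, τ, G) a C*-dynamical system
    (τ : G → A ≃⋆ₐ[ℂ] A)
    (hτ_one : ∀ a : A, τ 1 a = a)
    (hτ_mul : ∀ g h a, τ g (τ h a) = τ (g * h) a)
    (hω_inv : ∀ g a, ω (τ g a) = ω a)
    (hτ_meas : ∀ a b : A, Measurable fun g : G => ω (a * τ g b))
    -- the system is weakly mixing (w.r.t. some, equivalently every, Følner sequence in G)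
    (hWM : ∃ Λ : ℕ → Set G, (∀ n, MeasurableSet (Λ n)) ∧
      (∀ᶠ n in atTop, 0 < Measure.count (Λ n) ∧ Measure.count (Λ n) < ⊤) ∧
      (∀ g : G, Tendsto
        (fun n => (Measure.count (symmDiff (Λ n) (Λ n * {g}))).toReal / (Measure.count (Λ n)).toReal)
        atTop (𝓝 0)) ∧
      ∀ a b : A, Tendsto
        (fun n => (Measure.count (Λ n)).toReal⁻¹ * ∫ g in Λ n, ‖ω (a * τ g b) - ω a * ω b‖ ∂Measure.count)
        atTop (𝓝 0))
    -- (g,h,j,k) ↦ ω(τ_h(a₁) τ_g(a₂) τ_{gh}(a₃) τ_{jk}(a₄) τ_j(a₅) τ_k(a₆)) is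
    -- Σ² × Σ²-measurable
    (hmeas6 : ∀ a₁ a₂ a₃ a₄ a₅ a₆ : A, Measurable fun q : (G × G) × (G × G) =>
      ω (τ q.1.2 a₁ * τ q.1.1 a₂ * τ (q.1.1 * q.1.2) a₃ *
        τ (q.2.1 * q.2.2) a₄ * τ q.2.1 a₅ * τ q.2.2 a₆))
    -- a uniform Følner sequence (Λ1 n) in G ...
    (Λ1 : ℕ → Set G)
    (hΛ1meas : ∀ n, MeasurableSet (Λ1 n))
    (hΛ1fin : ∀ᶠ n in atTop, 0 < Measure.count (Λ1 n) ∧ Measure.count (Λ1 n) < ⊤)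
    (hΛ1folner : ∀ g : G, Tendsto
      (fun n => (Measure.count (symmDiff (Λ1 n) (Λ1 n * {g}))).toReal / (Measure.count (Λ1 n)).toReal)
      atTop (𝓝 0))
    (hΛ1unif : ∀ᶠ m in atTop, ∀ ε > (0 : ℝ), ∀ᶠ n in atTop, ∀ g ∈ Λ1 m,
      (Measure.count (symmDiff (Λ1 n) (Λ1 n * {g}))).toReal ≤ ε * (Measure.count (Λ1 n)).toReal)
    -- ... satisfying the Tempel'man condition ...
    (hΛ1temp : ∃ c : ℝ, 0 < c ∧ ∀ᶠ n in atTop, MeasurableSet ((Λ1 n)⁻¹ * Λ1 n) ∧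
      Measure.count ((Λ1 n)⁻¹ * Λ1 n) ≤ ENNReal.ofReal c * Measure.count (Λ1 n))
    -- ... and such that (Λ1 n⁻¹ Λ1 n) is also Følner in G
    (hΛ1invfin : ∀ᶠ n in atTop, 0 < Measure.count ((Λ1 n)⁻¹ * Λ1 n) ∧ Measure.count ((Λ1 n)⁻¹ * Λ1 n) < ⊤)
    (hΛ1invfolner : ∀ g : G, Tendsto
      (fun n => (Measure.count (symmDiff ((Λ1 n)⁻¹ * Λ1 n) (((Λ1 n)⁻¹ * Λ1 n) * {g}))).toReal /
        (Measure.count ((Λ1 n)⁻¹ * Λ1 n)).toReal)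
      atTop (𝓝 0))
    -- a uniform Følner sequence (Λ2 n) in G ...
    (Λ2 : ℕ → Set G)
    (hΛ2meas : ∀ n, MeasurableSet (Λ2 n))
    (hΛ2fin : ∀ᶠ n in atTop, 0 < Measure.count (Λ2 n) ∧ Measure.count (Λ2 n) < ⊤)
    (hΛ2folner : ∀ g : G, Tendsto
      (fun n => (Measure.count (symmDiff (Λ2 n) (Λ2 n * {g}))).toReal / (Measure.count (Λ2 n)).toReal)
      atTop (𝓝 0))
    (hΛ2unif : ∀ᶠ m in atTop, ∀ ε > (0 : ℝ), ∀ᶠ n in atTop, ∀ g ∈ Λ2 m,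
      (Measure.count (symmDiff (Λ2 n) (Λ2 n * {g}))).toReal ≤ ε * (Measure.count (Λ2 n)).toReal)
    -- ... satisfying the Tempel'man condition ...
    (hΛ2temp : ∃ c : ℝ, 0 < c ∧ ∀ᶠ n in atTop, MeasurableSet ((Λ2 n)⁻¹ * Λ2 n) ∧
      Measure.count ((Λ2 n)⁻¹ * Λ2 n) ≤ ENNReal.ofReal c * Measure.count (Λ2 n))
    -- ... and such that (Λ2 n⁻¹ Λ2 n) is also Følner in G
    (hΛ2invfin : ∀ᶠ n in atTop, 0 < Measure.count ((Λ2 n)⁻¹ * Λ2 n) ∧ Measure.count ((Λ2 n)⁻¹ * Λ2 n) < ⊤)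
    (hΛ2invfolner : ∀ g : G, Tendsto
      (fun n => (Measure.count (symmDiff ((Λ2 n)⁻¹ * Λ2 n) (((Λ2 n)⁻¹ * Λ2 n) * {g}))).toReal /
        (Measure.count ((Λ2 n)⁻¹ * Λ2 n)).toReal)
      atTop (𝓝 0))
    -- the system is uniformly asymptotically abelian with respect to (Λ1 n) (ε-form)
    (hcomm_meas : ∀ a b : A, Measurable fun g : G => ‖a * τ g b - τ g b * a‖)
    (hUAA : ∀ a b : A, ∀ ε > (0 : ℝ), ∀ᶠ n in atTop, ∀ h : G,
      (Measure.count (Λ1 n)).toReal⁻¹ * ∫ g in Λ1 n * {h}, ‖a * τ g b - τ g b * a‖ ∂Measure.count ≤ ε)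
 :
    -- conclusion (in ε-form)
    ∀ a b c d : A, ∀ ε > (0 : ℝ), ∀ᶠ n in atTop, ∀ g₁ g₂ : G,
      ‖((Measure.count (Λ1 n)).toReal * (Measure.count (Λ2 n)).toReal)⁻¹ •
          (∫ h in Λ1 n * {g₁}, ∫ g in Λ2 n * {g₂},
            ω (τ (g * h) a * τ g b * τ h c * d) ∂Measure.count ∂Measure.count)
        - ω a * ω b * ω c * ω d‖ ≤ ε := by
  let : CStarAlgebra A := {}
  obtain ⟨Λ, hΛmeas, hΛfin, -, hmix⟩ := hWM
  exact fun a b c d ε hε => bergelson_weakly_mixing_uniform_general ω hω_pos hω_one hω_tracial τ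
    hτ_mul hω_inv hτ_meas (.of_forall hΛmeas) hΛfin hmix
    (isFoelner_count_of_tendsto_toReal hΛ1meas hΛ1fin hΛ1folner)
    (isFoelner_count_of_tendsto_toReal hΛ2meas hΛ2fin hΛ2folner) a b c d hε
end
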